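/- arXiv:1103.1980 — 2 statements merged into one kernel-verified Lean document; each statement's English description precedes it below -/
import Mathlib

section
/- Sperner's lemma in dimension 2: any Sperner labeling of a triangulation of a triangle admits an odd number of fully labeled small triangles; in particular at least one fully labeled triangle exists. -/
open scoped Classical

/-- A triangulation of the standard 2-dimensional simplex (a triangle):
a finite vertex set with geometric positions in the simplex, and a finite
family of small triangles (each given by its 3 affinely independent vertices)
whose convex hulls cover the triangle and intersect pairwise in the convex
hull of their common vertices. -/
structure Triangulation2 where
  V : Type
  [fintypeV : Fintype V]
  [decV : DecidableEq V]
  pos : V → (Fin 3 → ℝ)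
  pos_mem : ∀ v, pos v ∈ stdSimplex ℝ (Fin 3)
  triangles : Finset (Finset V)
  card_triangle : ∀ s ∈ triangles, s.card = 3
  indep : ∀ s ∈ triangles, AffineIndependent ℝ (fun v : s => pos v)
  covers : (⋃ s ∈ triangles, convexHull ℝ (pos '' (s : Set V))) = stdSimplex ℝ (Fin 3)
  inter : ∀ s ∈ triangles, ∀ t ∈ triangles,
    convexHull ℝ (pos '' (s : Set V)) ∩ convexHull ℝ (pos '' (t : Set V))
      = convexHull ℝ (pos '' ((s ∩ t : Finset V) : Set V))


namespace Sperner2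

/-- The linear combination of the vertex positions with given weights. -/
noncomputable def comb {V : Type} [Fintype V] (pos : V → (Fin 3 → ℝ)) :
    (V → ℝ) →ₗ[ℝ] (Fin 3 → ℝ) := Fintype.linearCombination ℝ pos

theorem comb_apply {V : Type} [Fintype V] (pos : V → (Fin 3 → ℝ)) (w : V → ℝ) (i : Fin 3) :
    comb pos w i = ∑ v, w v * pos v i := by
  simp [comb, Fintype.linearCombination_apply, Finset.sum_apply]

/-- The cones over the triangles form a complete simplicial fan in the orthant. -/
structure IsFan {V : Type} [Fintype V] (pos : V → (Fin 3 → ℝ)) (T : Finset (Finset V)) : Prop where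
  nonneg : ∀ v i, 0 ≤ pos v i
  uniq : ∀ s ∈ T, ∀ t ∈ T, ∀ w w' : V → ℝ, (∀ v, 0 ≤ w v) → (∀ v, 0 ≤ w' v) →
    (∀ v, v ∉ s → w v = 0) → (∀ v, v ∉ t → w' v = 0) → comb pos w = comb pos w' → w = w'
  indep : ∀ t ∈ T, ∀ w : V → ℝ, (∀ v, v ∉ t → w v = 0) → comb pos w = 0 → w = 0
  cover : ∀ x : Fin 3 → ℝ, (∀ i, 0 ≤ x i) → ∃ t ∈ T, ∃ w : V → ℝ, (∀ v, 0 ≤ w v) ∧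
    (∀ v, v ∉ t → w v = 0) ∧ comb pos w = x

theorem mem_hull {V : Type} [Fintype V] (pos : V → (Fin 3 → ℝ)) (s : Finset V) (x : Fin 3 → ℝ) :
    x ∈ convexHull ℝ (pos '' (s : Set V)) ↔ ∃ w : V → ℝ, (∀ v, 0 ≤ w v) ∧
      (∀ v, v ∉ s → w v = 0) ∧ ∑ v, w v = 1 ∧ comb pos w = x := by
  constructor
  · have hc : Convex ℝ {w : V → ℝ | (∀ v, 0 ≤ w v) ∧ (∀ v, v ∉ s → w v = 0) ∧ ∑ v, w v = 1} := by
      rintro w ⟨h1, h2, h3⟩ w' ⟨h1', h2', h3'⟩ a b ha hb hab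
      refine ⟨fun v => ?_, fun v hv => ?_, ?_⟩
      · have := h1 v; have := h1' v
        simp only [Pi.add_apply, Pi.smul_apply, smul_eq_mul]; positivity
      · simp [h2 v hv, h2' v hv]
      · simp [Finset.sum_add_distrib, ← Finset.mul_sum, h3, h3', hab]
    have hc' := hc.linear_image (comb pos)
    intro hx
    have : pos '' (s : Set V) ⊆ (comb pos) ''
        {w : V → ℝ | (∀ v, 0 ≤ w v) ∧ (∀ v, v ∉ s → w v = 0) ∧ ∑ v, w v = 1} := by
      rintro _ ⟨v, hv, rfl⟩
      refine ⟨Pi.single v 1, ⟨fun u => ?_, fun u hu => ?_, ?_⟩, ?_⟩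
      · by_cases h : u = v
        · subst h; simp
        · simp [h]
      · have : u ≠ v := by rintro rfl; exact hu hv
        simp [this]
      · simp
      · simp [comb]
    obtain ⟨w, ⟨h1, h2, h3⟩, h4⟩ := convexHull_min this hc' hx
    exact ⟨w, h1, h2, h3, h4⟩
  · rintro ⟨w, h1, h2, h3, rfl⟩
    have hs : ∑ v ∈ s, w v = 1 := by
      rw [← h3]; exact Finset.sum_subset (Finset.subset_univ s) (fun v _ hv => h2 v hv)
    have := s.centerMass_mem_convexHull (R := ℝ) (w := w) (z := pos) (s := pos '' (s : Set V))
      (fun i _ => h1 i) (by rw [hs]; norm_num) (fun i hi => ⟨i, hi, rfl⟩)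
    rw [Finset.centerMass_eq_of_sum_1 _ _ hs] at this
    convert this using 1
    simp only [comb, Fintype.linearCombination_apply]
    exact (Finset.sum_subset (Finset.subset_univ s) (fun v _ hv => by simp [h2 v hv])).symm

theorem isFan (T : Triangulation2) : @IsFan T.V T.fintypeV T.pos T.triangles := by
  let _ := T.fintypeV
  have hsum : ∀ w : T.V → ℝ, ∑ i, comb T.pos w i = ∑ v, w v := by
    intro w
    simp only [comb_apply]
    rw [Finset.sum_comm]
    refine Finset.sum_congr rfl fun v _ => ?_
    rw [← Finset.mul_sum, (T.pos_mem v).2, mul_one]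
  have hind : ∀ t ∈ T.triangles, ∀ w : T.V → ℝ, (∀ v, v ∉ t → w v = 0) →
      comb T.pos w = 0 → w = 0 := by
    intro t ht w hw h
    have h0 : ∑ v, w v = 0 := by rw [← hsum, h]; simp
    have h1 : ∑ v ∈ t, w v = 0 := by
      rw [← h0]; exact Finset.sum_subset (Finset.subset_univ t) (fun v _ hv => hw v hv)
    have h2 : ∑ v ∈ t, w v • T.pos v = 0 := by
      rw [← h]
      simp only [comb, Fintype.linearCombination_apply]
      exact (Finset.sum_subset (Finset.subset_univ t) (fun v _ hv => by simp [hw v hv]))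
    have h3 := (affineIndependent_iff.1 (T.indep t ht)) Finset.univ (fun v => w v)
      (by rw [← h1]; exact Finset.sum_coe_sort t w)
      (by rw [← h2]; exact Finset.sum_coe_sort t (fun v => w v • T.pos v))
    funext v
    by_cases hv : v ∈ t
    · exact h3 ⟨v, hv⟩ (Finset.mem_univ _)
    · exact hw v hv
  refine ⟨fun v i => (T.pos_mem v).1 i, ?_, hind, ?_⟩
  · intro s hs t ht w w' h0 h0' h1 h1' he
    have hc : ∑ v, w v = ∑ v, w' v := by rw [← hsum, ← hsum, he]
    set c := ∑ v, w v with hcdef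
    by_cases hz : c = 0
    · have e1 : ∀ v, w v = 0 := fun v =>
        (Finset.sum_eq_zero_iff_of_nonneg (fun v _ => h0 v)).1 hz v (Finset.mem_univ _)
      have e2 : ∀ v, w' v = 0 := fun v =>
        (Finset.sum_eq_zero_iff_of_nonneg (fun v _ => h0' v)).1 (hc ▸ hz) v (Finset.mem_univ _)
      funext v; rw [e1, e2]
    · have hcp : 0 < c := lt_of_le_of_ne (Finset.sum_nonneg fun v _ => h0 v) (Ne.symm hz)
      have m1 : comb T.pos (c⁻¹ • w) ∈ convexHull ℝ (T.pos '' (s : Set T.V)) := by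
        rw [mem_hull]
        refine ⟨c⁻¹ • w, fun v => ?_, fun v hv => by simp [h1 v hv], ?_, rfl⟩
        · have := h0 v
          simp only [Pi.smul_apply, smul_eq_mul]; positivity
        · simp only [Pi.smul_apply, smul_eq_mul, ← Finset.mul_sum]
          rw [← hcdef]; field_simp
      have m2 : comb T.pos (c⁻¹ • w) ∈ convexHull ℝ (T.pos '' (t : Set T.V)) := by
        rw [mem_hull]
        refine ⟨c⁻¹ • w', fun v => ?_, fun v hv => by simp [h1' v hv], ?_, by simp [he]⟩
        · have := h0' v
          simp only [Pi.smul_apply, smul_eq_mul]; positivity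
        · simp only [Pi.smul_apply, smul_eq_mul, ← Finset.mul_sum]
          rw [← hc]; field_simp
      have m3 := (T.inter s hs t ht).subset ⟨m1, m2⟩
      rw [mem_hull] at m3
      obtain ⟨u, -, hu, -, hu2⟩ := m3
      have a1 : c⁻¹ • w - u = 0 := by
        apply hind s hs
        · intro v hv
          have : u v = 0 := hu v (by simp [hv])
          simp [h1 v hv, this]
        · rw [map_sub, hu2, sub_self]
      have a2 : c⁻¹ • w' - u = 0 := by
        apply hind t ht
        · intro v hv
          have : u v = 0 := hu v (by simp [hv])
          simp [h1' v hv, this]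
        · rw [map_sub, hu2]; simp [he]
      have a3 : c⁻¹ • w = c⁻¹ • w' := (sub_eq_zero.1 a1).trans (sub_eq_zero.1 a2).symm
      exact smul_right_injective _ (inv_ne_zero hz) a3
  · have key : ∀ x ∈ stdSimplex ℝ (Fin 3), ∃ t ∈ T.triangles, ∃ w : T.V → ℝ, (∀ v, 0 ≤ w v) ∧
        (∀ v, v ∉ t → w v = 0) ∧ comb T.pos w = x := by
      intro x hx
      rw [← T.covers] at hx
      simp only [Set.mem_iUnion] at hx
      obtain ⟨t, ht, hx⟩ := hx
      rw [mem_hull] at hx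
      obtain ⟨w, h1, h2, -, h3⟩ := hx
      exact ⟨t, ht, w, h1, h2, h3⟩
    intro x hx
    by_cases hz : ∑ i, x i = 0
    · have : x = 0 := by
        funext i
        exact (Finset.sum_eq_zero_iff_of_nonneg (fun v _ => hx v)).1 hz i (Finset.mem_univ _)
      subst this
      obtain ⟨t, ht, -⟩ := key (Pi.single 0 1) (single_mem_stdSimplex ℝ 0)
      exact ⟨t, ht, 0, fun _ => le_rfl, fun _ _ => rfl, map_zero _⟩
    · set c := ∑ i, x i with hcdef
      have hcp : 0 < c := lt_of_le_of_ne (Finset.sum_nonneg fun v _ => hx v) (Ne.symm hz)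
      obtain ⟨t, ht, w, h1, h2, h3⟩ := key (c⁻¹ • x) ⟨fun i => by
          have := hx i
          simp only [Pi.smul_apply, smul_eq_mul]; positivity, by
          simp only [Pi.smul_apply, smul_eq_mul, ← Finset.mul_sum]
          rw [← hcdef]; field_simp⟩
      refine ⟨t, ht, c • w, fun v => ?_, fun v hv => by simp [h2 v hv], ?_⟩
      · have := h1 v
        simp only [Pi.smul_apply, smul_eq_mul]; positivity
      · rw [map_smul, h3, smul_smul, mul_inv_cancel₀ hz, one_smul]

theorem exists_local {V : Type} [Fintype V] {pos : V → (Fin 3 → ℝ)} {T : Finset (Finset V)}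
    (h : IsFan pos T) (p d : Fin 3 → ℝ) (δ : ℝ) (hδ : 0 < δ)
    (hp : ∀ ε : ℝ, 0 < ε → ε ≤ δ → ∀ i, 0 ≤ p i + ε * d i) :
    ∃ t ∈ T, ∃ a u : V → ℝ, (∀ v, 0 ≤ a v) ∧ (∀ v, v ∉ t → a v = 0) ∧ (∀ v, v ∉ t → u v = 0) ∧
      comb pos a = p ∧ comb pos u = d ∧ ∀ v, a v = 0 → 0 ≤ u v := by
  set e : ℕ → ℝ := fun n => δ / (n + 1) with he
  have hepos : ∀ n, 0 < e n := fun n => by simp only [he]; positivity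
  have hele : ∀ n, e n ≤ δ := fun n => by
    simp only [he]
    exact div_le_self hδ.le (by linarith [(Nat.cast_nonneg n : (0 : ℝ) ≤ n)])
  have hinj : ∀ m n, e m = e n → m = n := by
    intro m n hmn
    simp only [he] at hmn
    have h1 : (0 : ℝ) < m + 1 := by positivity
    have h2 : (0 : ℝ) < n + 1 := by positivity
    rw [div_eq_div_iff h1.ne' h2.ne'] at hmn
    have := mul_left_cancel₀ hδ.ne' hmn
    have : (m : ℝ) = n := by linarith
    exact_mod_cast this
  have hc : ∀ n, ∃ t ∈ T, ∃ w : V → ℝ, (∀ v, 0 ≤ w v) ∧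
      (∀ v, v ∉ t → w v = 0) ∧ comb pos w = p + e n • d := fun n =>
    h.cover _ (fun i => by simpa using hp (e n) (hepos n) (hele n) i)
  choose t ht w hw0 hwt hw using hc
  obtain ⟨t0, ht0⟩ := Finite.exists_infinite_fiber t
  have hinf : (t ⁻¹' {t0}).Infinite := Set.infinite_coe_iff.1 ht0
  obtain ⟨n1, hn1, -⟩ := hinf.exists_gt 0
  obtain ⟨n2, hn2, hlt⟩ := hinf.exists_gt n1
  have hn1' : t n1 = t0 := hn1
  have hn2' : t n2 = t0 := hn2
  have hne : e n1 - e n2 ≠ 0 := fun hh => hlt.ne (hinj _ _ (sub_eq_zero.1 hh))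
  have ht0T : t0 ∈ T := hn1' ▸ ht n1
  set u : V → ℝ := (e n1 - e n2)⁻¹ • (w n1 - w n2) with hu
  have hut : ∀ v, v ∉ t0 → u v = 0 := by
    intro v hv
    have h1 := hwt n1 v (hn1'.symm ▸ hv)
    have h2 := hwt n2 v (hn2'.symm ▸ hv)
    simp [hu, h1, h2]
  have hud : comb pos u = d := by
    rw [hu, map_smul, map_sub, hw, hw]
    have : p + e n1 • d - (p + e n2 • d) = (e n1 - e n2) • d := by rw [sub_smul]; abel
    rw [this, smul_smul, inv_mul_cancel₀ hne, one_smul]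
  set a : V → ℝ := w n1 - e n1 • u with ha
  have hat : ∀ v, v ∉ t0 → a v = 0 := by
    intro v hv
    have h1 := hwt n1 v (hn1'.symm ▸ hv)
    simp [ha, h1, hut v hv]
  have hap : comb pos a = p := by
    rw [ha, map_sub, map_smul, hw, hud]; abel
  have hall : ∀ n, t n = t0 → ∀ v, 0 ≤ a v + e n * u v := by
    intro n hn v
    have : w n - (a + e n • u) = 0 := by
      apply h.indep t0 ht0T
      · intro v hv
        have h1 := hwt n v (hn.symm ▸ hv)
        simp [h1, hut v hv, hat v hv]
      · rw [map_sub, map_add, map_smul, hap, hud, hw, sub_self]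
    have h2 := congrFun this v
    simp only [Pi.sub_apply, Pi.add_apply, Pi.smul_apply, smul_eq_mul, Pi.zero_apply] at h2
    have := hw0 n v
    linarith
  refine ⟨t0, ht0T, a, u, ?_, hat, hut, hap, hud, ?_⟩
  · intro v
    by_contra hneg
    push Not at hneg
    obtain ⟨N, hN⟩ := exists_nat_gt (δ * |u v| / (-a v))
    obtain ⟨n, hn, hnN⟩ := hinf.exists_gt N
    have h1 := hall n hn v
    have h2 : δ * |u v| < N * (-a v) := by
      rwa [div_lt_iff₀ (by linarith)] at hN
    have h3 : (N : ℝ) ≤ n := by exact_mod_cast hnN.le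
    have h4 : e n * u v ≤ e n * |u v| := mul_le_mul_of_nonneg_left (le_abs_self _) (hepos n).le
    have h5 : e n * (n + 1) = δ := by
      simp only [he]; field_simp
    have h6 : -a v ≤ e n * |u v| := by linarith
    have h7 : (-a v) * (n + 1) ≤ δ * |u v| := by
      have := mul_le_mul_of_nonneg_right h6 (by positivity : (0 : ℝ) ≤ n + 1)
      calc _ ≤ _ := this
        _ = e n * (n + 1) * |u v| := by ring
        _ = _ := by rw [h5]
    nlinarith
  · intro v hv
    have h1 := hall n1 hn1' v
    rw [hv, zero_add] at h1
    exact nonneg_of_mul_nonneg_right h1 (hepos n1)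

/-- The indicator function of a finset. -/
noncomputable def chi {V : Type} (F : Finset V) : V → ℝ := fun v => if v ∈ F then 1 else 0

theorem comb_single {V : Type} [Fintype V] (pos : V → (Fin 3 → ℝ)) (v : V) :
    comb pos (Pi.single v 1) = pos v := by
  simp [comb]

theorem exists_local_face {V : Type} [Fintype V] {pos : V → (Fin 3 → ℝ)} {T : Finset (Finset V)}
    (h : IsFan pos T) (F s : Finset V) (hs : s ∈ T) (hFs : F ⊆ s) (d : Fin 3 → ℝ)
    (hd : ∀ i, 0 ≤ d i ∨ 0 < comb pos (chi F) i) :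
    ∃ t ∈ T, F ⊆ t ∧ ∃ u : V → ℝ, (∀ v, v ∉ t → u v = 0) ∧ comb pos u = d ∧
      ∀ v, v ∉ F → 0 ≤ u v := by
  have hchi0 : ∀ v, 0 ≤ chi F v := fun v => by unfold chi; split_ifs <;> norm_num
  have hp0 : ∀ i, 0 ≤ comb pos (chi F) i := by
    intro i
    rw [comb_apply]
    exact Finset.sum_nonneg fun v _ => mul_nonneg (hchi0 v) (h.nonneg v i)
  have hδ : ∀ i, ∃ δ : ℝ, 0 < δ ∧ ∀ ε : ℝ, 0 < ε → ε ≤ δ → 0 ≤ comb pos (chi F) i + ε * d i := by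
    intro i
    rcases hd i with h1 | h1
    · exact ⟨1, one_pos, fun ε he _ => by have := hp0 i; positivity⟩
    · refine ⟨comb pos (chi F) i / (1 + |d i|), by positivity, fun ε he hle => ?_⟩
      rw [le_div_iff₀ (by positivity)] at hle
      have := neg_abs_le (d i)
      nlinarith
  choose δ hδ0 hδ1 using hδ
  obtain ⟨t, ht, a, u, ha0, hat, hut, hap, hud, hau⟩ :=
    exists_local h (comb pos (chi F)) d (min (min (δ 0) (δ 1)) (δ 2))
      (lt_min (lt_min (hδ0 0) (hδ0 1)) (hδ0 2)) (by
        intro ε he hle i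
        apply hδ1 i ε he
        simp only [le_min_iff] at hle
        fin_cases i
        · exact hle.1.1
        · exact hle.1.2
        · exact hle.2)
  have hac : a = chi F := by
    apply h.uniq t ht s hs a (chi F) ha0 hchi0 hat _ hap
    intro v hv
    have : v ∉ F := fun hvF => hv (hFs hvF)
    simp [chi, this]
  refine ⟨t, ht, ?_, u, hut, hud, ?_⟩
  · intro v hv
    by_contra hvt
    have := hat v hvt
    rw [hac] at this
    simp [chi, hv] at this
  · intro v hv
    apply hau
    rw [hac]; simp [chi, hv]

/-- The faces of the triangulation with `j` vertices lying in the face of the big simplex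
spanned by the first `j` vertices. -/
noncomputable def faces {V : Type} [Fintype V] (pos : V → (Fin 3 → ℝ)) (T : Finset (Finset V))
    (j : ℕ) : Finset (Finset V) :=
  Finset.univ.filter fun s => s.card = j ∧ (∃ t ∈ T, s ⊆ t) ∧
    ∀ v ∈ s, ∀ i : Fin 3, j ≤ i.val → pos v i = 0

theorem mem_faces {V : Type} [Fintype V] {pos : V → (Fin 3 → ℝ)} {T : Finset (Finset V)}
    {j : ℕ} {s : Finset V} : s ∈ faces pos T j ↔ s.card = j ∧ (∃ t ∈ T, s ⊆ t) ∧
    ∀ v ∈ s, ∀ i : Fin 3, j ≤ i.val → pos v i = 0 := by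
  simp [faces]

theorem exists_extend {V : Type} [Fintype V] {pos : V → (Fin 3 → ℝ)} {T : Finset (Finset V)}
    (h : IsFan pos T) (j : ℕ) (F s : Finset V) (hs : s ∈ T) (hFs : F ⊆ s) (hj : F.card = j)
    (hFW : ∀ v ∈ F, ∀ i : Fin 3, j + 1 ≤ i.val → pos v i = 0)
    (d : Fin 3 → ℝ) (hd0 : ∀ i : Fin 3, j + 1 ≤ i.val → d i = 0)
    (hd : ∀ i, 0 ≤ d i ∨ 0 < comb pos (chi F) i)
    (hdF : ∀ u : V → ℝ, (∀ v, v ∉ F → u v = 0) → comb pos u ≠ d) :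
    ∃ a, a ∉ F ∧ insert a F ∈ faces pos T (j + 1) ∧ ∃ t ∈ T, insert a F ⊆ t ∧ ∃ u : V → ℝ,
      (∀ v, v ∉ t → u v = 0) ∧ comb pos u = d ∧ 0 < u a := by
  obtain ⟨t, ht, hFt, u, hut, hud, hu0⟩ := exists_local_face h F s hs hFs d hd
  have hex : ∃ a, a ∉ F ∧ u a ≠ 0 := by
    by_contra hcon
    push Not at hcon
    exact hdF u hcon hud
  obtain ⟨a, haF, hua⟩ := hex
  have hat : a ∈ t := by
    by_contra hh; exact hua (hut a hh)
  have hsub : insert a F ⊆ t := Finset.insert_subset hat hFt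
  have hpos : 0 < u a := lt_of_le_of_ne (hu0 a haF) (Ne.symm hua)
  refine ⟨a, haF, ?_, t, ht, hsub, u, hut, hud, hpos⟩
  rw [mem_faces]
  refine ⟨by rw [Finset.card_insert_of_notMem haF, hj], ⟨t, ht, hsub⟩, ?_⟩
  intro v hv i hi
  rcases Finset.mem_insert.1 hv with rfl | hv
  · have h1 : ∑ x, u x * pos x i = 0 := by rw [← comb_apply, hud, hd0 i hi]
    have h2 := (Finset.sum_eq_zero_iff_of_nonneg (fun x _ => by
      by_cases hx : x ∈ F
      · rw [hFW x hx i hi, mul_zero]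
      · exact mul_nonneg (hu0 x hx) (h.nonneg x i))).1 h1 v (Finset.mem_univ _)
    exact (mul_eq_zero.1 h2).resolve_left hua
  · exact hFW v hv i hi

theorem exists_span {V : Type} [Fintype V] {pos : V → (Fin 3 → ℝ)} {T : Finset (Finset V)}
    (h : IsFan pos T) (j : ℕ) (hj : j ≤ 3) (s : Finset V) (hs : s ∈ faces pos T j)
    (x : Fin 3 → ℝ) (hx : ∀ i : Fin 3, j ≤ i.val → x i = 0) :
    ∃ c : V → ℝ, (∀ v, v ∉ s → c v = 0) ∧ comb pos c = x := by
  rw [mem_faces] at hs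
  obtain ⟨hc, ⟨t, ht, hst⟩, hW⟩ := hs
  let b : s → ({i : Fin 3 // i.val < j} → ℝ) := fun v i => pos v i
  have hext : ∀ g : s → ℝ, ∀ i : Fin 3,
      comb pos (fun v => if hv : v ∈ s then g ⟨v, hv⟩ else 0) i = ∑ v : s, g v * pos v i := by
    intro g i
    rw [comb_apply, ← Finset.sum_subset (Finset.subset_univ s), ← Finset.sum_coe_sort s]
    · refine Finset.sum_congr rfl fun v _ => ?_
      simp
    · intro v _ hv; simp [hv]
  have hli : LinearIndependent ℝ b := by
    rw [Fintype.linearIndependent_iff]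
    intro g hg v
    have h0 : (fun v => if hv : v ∈ s then g ⟨v, hv⟩ else 0) = (0 : V → ℝ) := by
      apply h.indep t ht
      · intro v hv
        have : v ∉ s := fun hh => hv (hst hh)
        simp [this]
      · funext i
        rw [hext]
        by_cases hi : i.val < j
        · have := congrFun hg ⟨i, hi⟩
          simpa [b, Finset.sum_apply] using this
        · exact Finset.sum_eq_zero fun v _ => by rw [hW v v.2 i (not_lt.1 hi), mul_zero]
    have := congrFun h0 v
    simpa using this
  have hspan := hli.span_eq_top_of_card_eq_finrank' (by
    rw [Fintype.card_coe, hc, Module.finrank_fintype_fun_eq_card, Fintype.card_subtype]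
    interval_cases j <;> simp <;> decide)
  have hmem : (fun i : {i : Fin 3 // i.val < j} => x i) ∈ Submodule.span ℝ (Set.range b) := by
    rw [hspan]; trivial
  obtain ⟨g, hg⟩ := (Submodule.mem_span_range_iff_exists_fun ℝ).1 hmem
  refine ⟨fun v => if hv : v ∈ s then g ⟨v, hv⟩ else 0, fun v hv => by simp [hv], ?_⟩
  funext i
  rw [hext]
  by_cases hi : i.val < j
  · have := congrFun hg ⟨i, hi⟩
    simpa [b, Finset.sum_apply] using this
  · rw [hx i (not_lt.1 hi)]
    exact Finset.sum_eq_zero fun v _ => by rw [hW v v.2 i (not_lt.1 hi), mul_zero]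

theorem apex_unique {V : Type} [Fintype V] {pos : V → (Fin 3 → ℝ)} {T : Finset (Finset V)}
    (h : IsFan pos T) (F s s' : Finset V) (hs : s ∈ T) (hs' : s' ∈ T) (a a' : V)
    (ha : a ∉ F) (has : insert a F ⊆ s) (has' : insert a' F ⊆ s')
    (α β : ℝ) (hα : 0 < α) (hβ : 0 < β) (f : V → ℝ) (hf : ∀ v, v ∉ F → f v = 0)
    (he : α • pos a = β • pos a' + comb pos f) : a = a' := by
  have hM : ∀ v, |f v| ≤ ∑ x, |f x| := fun v =>
    Finset.single_le_sum (f := fun x => |f x|) (fun x _ => abs_nonneg _) (Finset.mem_univ v)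
  set M := ∑ x, |f x|
  have hM0 : 0 ≤ M := Finset.sum_nonneg fun x _ => abs_nonneg _
  have hsn : ∀ (x v : V), 0 ≤ (Pi.single x 1 : V → ℝ) v := by
    intro x v
    rw [Pi.single_apply]; split_ifs <;> norm_num
  have hchi0 : ∀ v, 0 ≤ chi F v := fun v => by unfold chi; split_ifs <;> norm_num
  have key := h.uniq s hs s' hs' (α • Pi.single a 1 + M • chi F)
    (β • Pi.single a' 1 + (f + M • chi F)) ?_ ?_ ?_ ?_ ?_
  · by_contra hne
    have := congrFun key a
    simp [chi, ha, hf a ha, hne] at this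
    exact hα.ne' this
  · intro v
    have := hsn a v; have := hchi0 v
    simp only [Pi.add_apply, Pi.smul_apply, smul_eq_mul]; positivity
  · intro v
    have h1 := hsn a' v
    have h2 : 0 ≤ f v + M * chi F v := by
      by_cases hv : v ∈ F
      · have := hM v
        have := neg_abs_le (f v)
        simp only [chi, hv, if_true]; linarith
      · simp [chi, hv, hf v hv]
    simp only [Pi.add_apply, Pi.smul_apply, smul_eq_mul]; positivity
  · intro v hv
    have h1 : v ≠ a := by rintro rfl; exact hv (has (Finset.mem_insert_self _ _))
    have h2 : v ∉ F := fun hh => hv (has (Finset.mem_insert_of_mem hh))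
    simp [chi, h1, h2]
  · intro v hv
    have h1 : v ≠ a' := by rintro rfl; exact hv (has' (Finset.mem_insert_self _ _))
    have h2 : v ∉ F := fun hh => hv (has' (Finset.mem_insert_of_mem hh))
    simp [chi, h1, h2, hf v h2]
  · simp only [map_add, map_smul, comb_single]
    rw [he]; abel

/-- Decompose a combination over `insert b F`. -/
theorem split_apex {V : Type} [Fintype V] (pos : V → (Fin 3 → ℝ)) (F : Finset V) (b : V)
    (c : V → ℝ) (hc : ∀ v, v ∉ insert b F → c v = 0) (hb : b ∉ F) :
    ∃ f : V → ℝ, (∀ v, v ∉ F → f v = 0) ∧ comb pos c = c b • pos b + comb pos f := by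
  refine ⟨c - c b • Pi.single b 1, ?_, ?_⟩
  · intro v hv
    by_cases hvb : v = b
    · subst hvb; simp
    · have := hc v (by simp [hv, hvb])
      simp [this, hvb]
  · rw [map_sub, map_smul, comb_single]; abel

theorem boundary_unique {V : Type} [Fintype V] {pos : V → (Fin 3 → ℝ)} {T : Finset (Finset V)}
    (h : IsFan pos T) (j : ℕ) (hj : j < 3) (F : Finset V) (a b : V) (ha : a ∉ F) (hb : b ∉ F)
    (haK : insert a F ∈ faces pos T (j + 1)) (hbK : insert b F ∈ faces pos T (j + 1))
    (i : Fin 3) (hi : i.val ≤ j) (hF : ∀ v ∈ F, pos v i = 0) : a = b := by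
  have hpos : ∀ x, insert x F ∈ faces pos T (j + 1) → 0 < pos x i := by
    intro x hx
    refine lt_of_le_of_ne (h.nonneg x i) (fun hz => ?_)
    obtain ⟨c, hc, hce⟩ := exists_span h (j + 1) hj _ hx (Pi.single i 1) (by
      intro k hk
      have : k ≠ i := by rintro rfl; omega
      simp [this])
    have h1 := congrFun hce i
    rw [comb_apply, Finset.sum_eq_zero] at h1
    · simp at h1
    · intro v _
      by_cases hv : v ∈ insert x F
      · rcases Finset.mem_insert.1 hv with rfl | hv
        · rw [← hz, mul_zero]
        · rw [hF v hv, mul_zero]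
      · rw [hc v hv, zero_mul]
  have hap := hpos a haK
  have hbp := hpos b hbK
  obtain ⟨c, hc, hce⟩ := exists_span h (j + 1) hj _ hbK (pos a)
    (fun k hk => (mem_faces.1 haK).2.2 a (Finset.mem_insert_self _ _) k hk)
  obtain ⟨f, hf, hfe⟩ := split_apex pos F b c hc hb
  have h1 : pos a i = c b * pos b i := by
    rw [← hce, hfe]
    have : comb pos f i = 0 := by
      rw [comb_apply]
      refine Finset.sum_eq_zero fun v _ => ?_
      by_cases hv : v ∈ F
      · rw [hF v hv, mul_zero]
      · rw [hf v hv, zero_mul]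
    simp [this]
  have hcb : 0 < c b := by
    rw [h1] at hap
    exact pos_of_mul_pos_left hap hbp.le
  obtain ⟨-, ⟨s, hs, has⟩, -⟩ := mem_faces.1 haK
  obtain ⟨-, ⟨s', hs', has'⟩, -⟩ := mem_faces.1 hbK
  exact apex_unique h F s s' hs hs' a b ha has has' 1 (c b) one_pos hcb f hf
    (by rw [one_smul, ← hfe, hce])

theorem interior_unique {V : Type} [Fintype V] {pos : V → (Fin 3 → ℝ)} {T : Finset (Finset V)}
    (h : IsFan pos T) (j : ℕ) (hj : j < 3) (F : Finset V) (a a' b : V) (ha : a ∉ F) (ha' : a' ∉ F)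
    (hb : b ∉ F) (hab : a ≠ b) (hab' : a' ≠ b)
    (haK : insert a F ∈ faces pos T (j + 1)) (haK' : insert a' F ∈ faces pos T (j + 1))
    (hbK : insert b F ∈ faces pos T (j + 1)) : a = a' := by
  have key : ∀ x, x ∉ F → x ≠ b → insert x F ∈ faces pos T (j + 1) → ∃ γ : ℝ, γ < 0 ∧
      ∃ f : V → ℝ, (∀ v, v ∉ F → f v = 0) ∧ pos x = γ • pos b + comb pos f := by
    intro x hx hxb hxK
    obtain ⟨c, hc, hce⟩ := exists_span h (j + 1) hj _ hbK (pos x)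
      (fun k hk => (mem_faces.1 hxK).2.2 x (Finset.mem_insert_self _ _) k hk)
    obtain ⟨f, hf, hfe⟩ := split_apex pos F b c hc hb
    obtain ⟨-, ⟨s, hs, hxs⟩, -⟩ := mem_faces.1 hxK
    obtain ⟨-, ⟨s', hs', hbs⟩, -⟩ := mem_faces.1 hbK
    refine ⟨c b, ?_, f, hf, by rw [← hce, hfe]⟩
    rcases lt_trichotomy (c b) 0 with hlt | heq | hgt
    · exact hlt
    · exfalso
      have := h.indep s hs (Pi.single x 1 - f) ?_ ?_
      · have := congrFun this x
        simp [hf x hx] at this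
      · intro v hv
        have h1 : v ≠ x := by rintro rfl; exact hv (hxs (Finset.mem_insert_self _ _))
        have h2 : v ∉ F := fun hh => hv (hxs (Finset.mem_insert_of_mem hh))
        simp [h1, hf v h2]
      · rw [map_sub, comb_single, ← hce, hfe, heq]; simp
    · exact absurd (apex_unique h F s s' hs hs' x b hx hxs hbs 1 (c b) one_pos hgt f hf
        (by rw [one_smul, ← hfe, hce])) hxb
  obtain ⟨γ, hγ, f, hf, hfe⟩ := key a ha hab haK
  obtain ⟨γ', hγ', f', hf', hfe'⟩ := key a' ha' hab' haK'
  obtain ⟨-, ⟨s, hs, has⟩, -⟩ := mem_faces.1 haK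
  obtain ⟨-, ⟨s', hs', has'⟩, -⟩ := mem_faces.1 haK'
  refine apex_unique h F s s' hs hs' a a' ha has has' (-γ') (-γ) (by linarith) (by linarith)
    (γ • f' - γ' • f) (fun v hv => by simp [hf v hv, hf' v hv]) ?_
  rw [hfe, hfe', map_sub, map_smul, map_smul]
  module

theorem interior_exists {V : Type} [Fintype V] {pos : V → (Fin 3 → ℝ)} {T : Finset (Finset V)}
    (h : IsFan pos T) (j : ℕ) (F : Finset V) (b : V) (hb : b ∉ F)
    (hbK : insert b F ∈ faces pos T (j + 1))
    (hF : ∀ i : Fin 3, i.val ≤ j → ∃ v ∈ F, pos v i ≠ 0) :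
    ∃ a, a ∉ F ∧ a ≠ b ∧ insert a F ∈ faces pos T (j + 1) := by
  obtain ⟨hcard, ⟨s, hs, hbs⟩, hW⟩ := mem_faces.1 hbK
  rw [Finset.card_insert_of_notMem hb] at hcard
  have hbW := hW b (Finset.mem_insert_self _ _)
  obtain ⟨a, haF, haK, t, ht, hat, u, hut, hud, hua⟩ := exists_extend h j F s hs
    (fun v hv => hbs (Finset.mem_insert_of_mem hv)) (by omega)
    (fun v hv => hW v (Finset.mem_insert_of_mem hv)) (-pos b)
    (fun i hi => by simp [hbW i hi])
    (fun i => by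
      by_cases hi : i.val ≤ j
      · right
        obtain ⟨v, hv, hvi⟩ := hF i hi
        rw [comb_apply]
        refine Finset.sum_pos' (fun x _ => mul_nonneg ?_ (h.nonneg x i))
          ⟨v, Finset.mem_univ _, ?_⟩
        · unfold chi; split_ifs <;> norm_num
        · have := lt_of_le_of_ne (h.nonneg v i) (Ne.symm hvi)
          simpa [chi, hv] using this
      · left
        simp [hbW i (by omega)])
    (fun u hu hue => by
      have := h.indep s hs (u + Pi.single b 1) ?_ ?_
      · have := congrFun this b
        simp [hu b hb] at this
      · intro v hv
        have h1 : v ≠ b := by rintro rfl; exact hv (hbs (Finset.mem_insert_self _ _))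
        have h2 : v ∉ F := fun hh => hv (hbs (Finset.mem_insert_of_mem hh))
        simp [h1, hu v h2]
      · rw [map_add, hue, comb_single]; simp)
  refine ⟨a, haF, ?_, haK⟩
  rintro rfl
  have := h.indep t ht (u + Pi.single a 1) ?_ ?_
  · have := congrFun this a
    simp at this
    linarith
  · intro v hv
    have h1 : v ≠ a := by rintro rfl; exact hv (hat (Finset.mem_insert_self _ _))
    simp [h1, hut v hv]
  · rw [map_add, hud, comb_single]; simp

theorem boundary_exists {V : Type} [Fintype V] {pos : V → (Fin 3 → ℝ)} {T : Finset (Finset V)}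
    (h : IsFan pos T) (j : ℕ) (hj : j < 3) (F : Finset V) (hF : F ∈ faces pos T j) :
    ∃ a, a ∉ F ∧ insert a F ∈ faces pos T (j + 1) := by
  obtain ⟨hcard, ⟨s, hs, hFs⟩, hW⟩ := mem_faces.1 hF
  obtain ⟨a, haF, haK, -⟩ := exists_extend h j F s hs hFs hcard
    (fun v hv i hi => hW v hv i (by omega)) (Pi.single ⟨j, hj⟩ 1)
    (fun i hi => by
      have : i ≠ ⟨j, hj⟩ := by rintro rfl; simp at hi
      simp [this])
    (fun i => by
      left
      rw [Pi.single_apply]; split_ifs <;> norm_num)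
    (fun u hu hue => by
      have h1 := congrFun hue ⟨j, hj⟩
      rw [comb_apply, Finset.sum_eq_zero] at h1
      · simp at h1
      · intro v _
        by_cases hv : v ∈ F
        · rw [hW v hv _ le_rfl, mul_zero]
        · rw [hu v hv, zero_mul])
  exact ⟨a, haF, haK⟩

/-- All labels below `j` occur on `s`. -/
def Rainbow {V : Type} (ℓ : V → Fin 3) (j : ℕ) (s : Finset V) : Prop :=
  ∀ k : Fin 3, k.val < j → ∃ v ∈ s, ℓ v = k

theorem card_labels (j : ℕ) (hj : j ≤ 3) :
    (Finset.univ.filter fun k : Fin 3 => k.val < j).card = j := by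
  interval_cases j <;> simp <;> decide

theorem odd_facets {V : Type} [Fintype V] (ℓ : V → Fin 3) (j : ℕ) (hj : j < 3) (s : Finset V)
    (hs : s.card = j + 1) (hl : ∀ v ∈ s, (ℓ v).val ≤ j) :
    Odd ((Finset.univ.filter fun F : Finset V =>
      (F.card = j ∧ Rainbow ℓ j F) ∧ F ⊆ s).card) ↔ Rainbow ℓ (j + 1) s := by
  set G := s.filter fun v => Rainbow ℓ j (s.erase v) with hG
  have hcard : (Finset.univ.filter fun F : Finset V =>
      (F.card = j ∧ Rainbow ℓ j F) ∧ F ⊆ s).card = G.card := by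
    symm
    refine Finset.card_bij (fun v _ => s.erase v) ?_ ?_ ?_
    · intro v hv
      rw [hG, Finset.mem_filter] at hv
      simp only [Finset.mem_filter, Finset.mem_univ, true_and]
      refine ⟨⟨?_, hv.2⟩, Finset.erase_subset _ _⟩
      rw [Finset.card_erase_of_mem hv.1, hs]; rfl
    · intro v hv w hw hvw
      rw [hG, Finset.mem_filter] at hv hw
      by_contra hne
      have : v ∈ s.erase w := Finset.mem_erase.2 ⟨hne, hv.1⟩
      rw [← hvw] at this
      simp at this
    · intro F hF
      simp only [Finset.mem_filter, Finset.mem_univ, true_and] at hF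
      obtain ⟨⟨h1, h2⟩, h3⟩ := hF
      obtain ⟨a, ha, rfl⟩ := Finset.exists_eq_insert_iff.2 ⟨h3, by rw [h1, hs]⟩
      refine ⟨a, ?_, Finset.erase_insert ha⟩
      rw [hG, Finset.mem_filter, Finset.erase_insert ha]
      exact ⟨Finset.mem_insert_self _ _, h2⟩
  rw [hcard]
  rcases G.eq_empty_or_nonempty with hGe | ⟨v, hv⟩
  · rw [hGe]
    simp only [Finset.card_empty, Nat.not_odd_zero, false_iff]
    intro hR
    obtain ⟨v, hv, hvj⟩ := hR ⟨j, hj⟩ (by simp)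
    have : v ∈ G := by
      rw [hG, Finset.mem_filter]
      refine ⟨hv, fun k hk => ?_⟩
      obtain ⟨w, hw, hwk⟩ := hR k (by omega)
      refine ⟨w, Finset.mem_erase.2 ⟨?_, hw⟩, hwk⟩
      rintro rfl
      rw [hvj] at hwk
      subst hwk
      simp at hk
    rw [hGe] at this
    simp at this
  · rw [hG, Finset.mem_filter] at hv
    obtain ⟨hvs, hvR⟩ := hv
    have hec : (s.erase v).card = j := by rw [Finset.card_erase_of_mem hvs, hs]; rfl
    have hsub : (Finset.univ.filter fun k : Fin 3 => k.val < j) ⊆ (s.erase v).image ℓ := by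
      intro k hk
      simp only [Finset.mem_filter, Finset.mem_univ, true_and] at hk
      obtain ⟨w, hw, hwk⟩ := hvR k hk
      exact Finset.mem_image.2 ⟨w, hw, hwk⟩
    have hle : ((s.erase v).image ℓ).card ≤ j := by
      calc _ ≤ _ := Finset.card_image_le
        _ = j := hec
    have heq := Finset.eq_of_subset_of_card_le hsub (by rw [card_labels j hj.le]; exact hle)
    have hinj : Set.InjOn ℓ (s.erase v : Finset V) := by
      rw [← Finset.card_image_iff, ← heq, card_labels j hj.le, hec]
    have hlt : ∀ w ∈ s, w ≠ v → (ℓ w).val < j := by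
      intro w hw hwv
      have : ℓ w ∈ (s.erase v).image ℓ :=
        Finset.mem_image_of_mem _ (Finset.mem_erase.2 ⟨hwv, hw⟩)
      rw [← heq] at this
      simpa using this
    have hinj' : ∀ x ∈ s, x ≠ v → ∀ y ∈ s, y ≠ v → ℓ x = ℓ y → x = y := by
      intro x hx hxv y hy hyv hxy
      exact hinj (Finset.mem_coe.2 (Finset.mem_erase.2 ⟨hxv, hx⟩))
        (Finset.mem_coe.2 (Finset.mem_erase.2 ⟨hyv, hy⟩)) hxy
    rcases (hl v hvs).lt_or_eq with hvj | hvj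
    · -- the label of `v` is repeated exactly once
      obtain ⟨w, hw, hwl⟩ := hvR (ℓ v) hvj
      obtain ⟨hwv, hws⟩ := Finset.mem_erase.1 hw
      have hG2 : G = {v, w} := by
        ext x
        rw [hG, Finset.mem_filter, Finset.mem_insert, Finset.mem_singleton]
        constructor
        · rintro ⟨hxs, hxR⟩
          by_contra hcon
          push Not at hcon
          obtain ⟨y, hy, hyl⟩ := hxR (ℓ x) (hlt x hxs hcon.1)
          obtain ⟨hyx, hys⟩ := Finset.mem_erase.1 hy
          by_cases hyv : y = v
          · subst hyv
            exact hcon.2 (hinj' x hxs hcon.1 w hws hwv (by rw [hwl, hyl]))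
          · exact hyx (hinj' y hys hyv x hxs hcon.1 hyl)
        · rintro (rfl | rfl)
          · exact ⟨hvs, hvR⟩
          · refine ⟨hws, fun k hk => ?_⟩
            obtain ⟨y, hy, hyl⟩ := hvR k hk
            by_cases hyw : y = x
            · subst hyw
              exact ⟨v, Finset.mem_erase.2 ⟨Ne.symm hwv, hvs⟩, by rw [← hwl, hyl]⟩
            · exact ⟨y, Finset.mem_erase.2 ⟨hyw, Finset.mem_of_mem_erase hy⟩, hyl⟩
      rw [hG2, Finset.card_pair (Ne.symm hwv)]
      constructor
      · intro h; exact absurd h (by decide)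
      · intro hR
        obtain ⟨y, hy, hyl⟩ := hR ⟨j, hj⟩ (by simp)
        have : (ℓ y).val = j := by rw [hyl]
        by_cases hyv : y = v
        · subst hyv; omega
        · have := hlt y hy hyv; omega
    · have hG1 : G = {v} := by
        ext x
        rw [hG, Finset.mem_filter, Finset.mem_singleton]
        constructor
        · rintro ⟨hxs, hxR⟩
          by_contra hxv
          obtain ⟨y, hy, hyl⟩ := hxR (ℓ x) (hlt x hxs hxv)
          obtain ⟨hyx, hys⟩ := Finset.mem_erase.1 hy
          have h1 := hlt x hxs hxv
          by_cases hyv : y = v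
          · subst hyv
            rw [← hyl] at h1; omega
          · exact hyx (hinj' y hys hyv x hxs hxv hyl)
        · rintro rfl
          exact ⟨hvs, hvR⟩
      rw [hG1, Finset.card_singleton]
      refine ⟨fun _ k hk => ?_, fun _ => odd_one⟩
      rcases (Nat.lt_succ_iff.1 hk).lt_or_eq with h1 | h1
      · obtain ⟨y, hy, hyl⟩ := hvR k h1
        exact ⟨y, Finset.mem_of_mem_erase hy, hyl⟩
      · exact ⟨v, hvs, Fin.ext (by omega)⟩

theorem odd_degree {V : Type} [Fintype V] {pos : V → (Fin 3 → ℝ)} {T : Finset (Finset V)}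
    (h : IsFan pos T) (ℓ : V → Fin 3) (hℓ : ∀ v, pos v (ℓ v) ≠ 0) (j : ℕ) (hj : j < 3)
    (F : Finset V) (hF : F.card = j) (hR : Rainbow ℓ j F) :
    Odd (((faces pos T (j + 1)).filter fun s => F ⊆ s).card) ↔ F ∈ faces pos T j := by
  have hins : ∀ s ∈ (faces pos T (j + 1)).filter (fun s => F ⊆ s),
      ∃ a, a ∉ F ∧ insert a F = s ∧ insert a F ∈ faces pos T (j + 1) := by
    intro s hs
    rw [Finset.mem_filter] at hs
    obtain ⟨a, ha, rfl⟩ := Finset.exists_eq_insert_iff.2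
      ⟨hs.2, by rw [hF, (mem_faces.1 hs.1).1]⟩
    exact ⟨a, ha, rfl, hs.1⟩
  constructor
  · intro hodd
    by_contra hFn
    obtain ⟨s, hs⟩ := Finset.card_pos.1 hodd.pos
    obtain ⟨b, hb, -, hbK⟩ := hins s hs
    obtain ⟨-, ⟨t, ht, hbt⟩, hW⟩ := mem_faces.1 hbK
    have hinter : ∀ i : Fin 3, i.val ≤ j → ∃ v ∈ F, pos v i ≠ 0 := by
      intro i hi
      rcases hi.lt_or_eq with h1 | h1
      · obtain ⟨v, hv, hvl⟩ := hR i h1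
        exact ⟨v, hv, hvl ▸ hℓ v⟩
      · by_contra hcon
        push Not at hcon
        refine hFn (mem_faces.2 ⟨hF, ⟨t, ht, fun v hv => hbt (Finset.mem_insert_of_mem hv)⟩, ?_⟩)
        intro v hv k hk
        rcases hk.lt_or_eq with h2 | h2
        · exact hW v (Finset.mem_insert_of_mem hv) k h2
        · have : k = i := Fin.ext (by omega)
          rw [this]; exact hcon v hv
    obtain ⟨a, ha, hab, haK⟩ := interior_exists h j F b hb hbK hinter
    have h2 : (faces pos T (j + 1)).filter (fun s => F ⊆ s) = {insert a F, insert b F} := by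
      ext s
      rw [Finset.mem_insert, Finset.mem_singleton]
      constructor
      · intro hs
        obtain ⟨x, hx, rfl, hxK⟩ := hins s hs
        by_cases hxb : x = b
        · right; rw [hxb]
        · left; rw [interior_unique h j hj F x a b hx ha hb hxb hab hxK haK hbK]
      · rintro (rfl | rfl)
        · exact Finset.mem_filter.2 ⟨haK, Finset.subset_insert _ _⟩
        · exact Finset.mem_filter.2 ⟨hbK, Finset.subset_insert _ _⟩
    have hne : insert a F ≠ insert b F := by
      intro heq
      have : a ∈ insert b F := heq ▸ Finset.mem_insert_self a F
      rcases Finset.mem_insert.1 this with h3 | h3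
      · exact hab h3
      · exact ha h3
    rw [h2, Finset.card_pair hne] at hodd
    exact absurd hodd (by decide)
  · intro hFK
    obtain ⟨b, hb, hbK⟩ := boundary_exists h j hj F hFK
    have h1 : (faces pos T (j + 1)).filter (fun s => F ⊆ s) = {insert b F} := by
      ext s
      rw [Finset.mem_singleton]
      constructor
      · intro hs
        obtain ⟨x, hx, rfl, hxK⟩ := hins s hs
        rw [boundary_unique h j hj F x b hx hb hxK hbK ⟨j, hj⟩ le_rfl
          (fun v hv => (mem_faces.1 hFK).2.2 v hv _ le_rfl)]
      · rintro rfl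
        exact Finset.mem_filter.2 ⟨hbK, Finset.subset_insert _ _⟩
    rw [h1, Finset.card_singleton]
    exact odd_one

theorem odd_step {V : Type} [Fintype V] {pos : V → (Fin 3 → ℝ)} {T : Finset (Finset V)}
    (h : IsFan pos T) (ℓ : V → Fin 3) (hℓ : ∀ v, pos v (ℓ v) ≠ 0) (j : ℕ) (hj : j < 3) :
    Odd (((faces pos T (j + 1)).filter (Rainbow ℓ (j + 1))).card) ↔
      Odd (((faces pos T j).filter (Rainbow ℓ j)).card) := by
  set B : Finset (Finset V) := Finset.univ.filter fun F => F.card = j ∧ Rainbow ℓ j F with hB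
  have hdc := Finset.sum_card_bipartiteAbove_eq_sum_card_bipartiteBelow
    (s := faces pos T (j + 1)) (t := B) (fun s F => F ⊆ s)
  have e1 := Finset.odd_sum_iff_odd_card_odd (s := faces pos T (j + 1))
    (fun s => (B.bipartiteAbove (fun s F => F ⊆ s) s).card)
  have e2 := Finset.odd_sum_iff_odd_card_odd (s := B)
    (fun F => ((faces pos T (j + 1)).bipartiteBelow (fun s F => F ⊆ s) F).card)
  rw [hdc] at e1
  have f1 : (faces pos T (j + 1)).filter (Rainbow ℓ (j + 1)) =
      (faces pos T (j + 1)).filter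
        (fun s => Odd (B.bipartiteAbove (fun s F => F ⊆ s) s).card) := by
    refine Finset.filter_congr fun s hs => ?_
    obtain ⟨hc, -, hW⟩ := mem_faces.1 hs
    rw [← odd_facets ℓ j hj s hc (fun v hv => by
      by_contra hcon
      exact hℓ v (hW v hv _ (by omega)))]
    rw [Finset.bipartiteAbove, hB, Finset.filter_filter]
  have f2 : (faces pos T j).filter (Rainbow ℓ j) = B.filter
      (fun F => Odd ((faces pos T (j + 1)).bipartiteBelow (fun s F => F ⊆ s) F).card) := by
    ext F
    rw [Finset.mem_filter, Finset.mem_filter, hB, Finset.mem_filter, Finset.bipartiteBelow]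
    constructor
    · rintro ⟨h1, h2⟩
      have hc := (mem_faces.1 h1).1
      exact ⟨⟨Finset.mem_univ _, hc, h2⟩, (odd_degree h ℓ hℓ j hj F hc h2).2 h1⟩
    · rintro ⟨⟨-, hc, h2⟩, h3⟩
      exact ⟨(odd_degree h ℓ hℓ j hj F hc h2).1 h3, h2⟩
  rw [f1, f2, ← e2]
  exact e1.symm

theorem odd_full {V : Type} [Fintype V] {pos : V → (Fin 3 → ℝ)} {T : Finset (Finset V)}
    (h : IsFan pos T) (hT : ∀ s ∈ T, s.card = 3) (ℓ : V → Fin 3) (hℓ : ∀ v, pos v (ℓ v) ≠ 0) :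
    Odd ((T.filter (fun s => ∀ k : Fin 3, ∃ v ∈ s, ℓ v = k)).card) := by
  have h0 : (faces pos T 0).filter (Rainbow ℓ 0) = {∅} := by
    obtain ⟨t, ht, -⟩ := h.cover 0 (fun _ => le_rfl)
    ext s
    rw [Finset.mem_filter, Finset.mem_singleton, mem_faces]
    constructor
    · rintro ⟨⟨h1, -⟩, -⟩
      exact Finset.card_eq_zero.1 h1
    · rintro rfl
      exact ⟨⟨rfl, ⟨t, ht, Finset.empty_subset _⟩, by simp⟩, fun k hk => absurd hk (by omega)⟩
  have h3 : T.filter (fun s => ∀ k : Fin 3, ∃ v ∈ s, ℓ v = k) =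
      (faces pos T 3).filter (Rainbow ℓ 3) := by
    ext s
    rw [Finset.mem_filter, Finset.mem_filter, mem_faces]
    constructor
    · rintro ⟨h1, h2⟩
      exact ⟨⟨hT s h1, ⟨s, h1, subset_rfl⟩, fun v _ i hi => absurd i.2 (by omega)⟩,
        fun k _ => h2 k⟩
    · rintro ⟨⟨h1, ⟨t, ht, hst⟩, -⟩, h2⟩
      have : s = t := Finset.eq_of_subset_of_card_le hst (by rw [hT t ht, h1])
      exact ⟨this ▸ ht, fun k => h2 k k.2⟩
  rw [h3, odd_step h ℓ hℓ 2 (by norm_num), odd_step h ℓ hℓ 1 (by norm_num),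
    odd_step h ℓ hℓ 0 (by norm_num), h0]
  simp

end Sperner2

/-- Sperner's lemma in dimension 2: any Sperner labeling (each vertex of the
triangulation is labeled by an index at which its barycentric coordinate is
nonzero) admits an odd number of fully labeled small triangles; in particular
at least one fully labeled triangle exists. -/
theorem sperner_lemma_dim2 (T : Triangulation2)
    (ℓ : T.V → Fin 3) (hℓ : ∀ v, T.pos v (ℓ v) ≠ 0) :
    Odd ((T.triangles.filter (fun s => ∀ k : Fin 3, ∃ v ∈ s, ℓ v = k)).card) ∧
    ∃ s ∈ T.triangles, ∀ k : Fin 3, ∃ v ∈ s, ℓ v = k := by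
  have hodd := @Sperner2.odd_full T.V T.fintypeV T.pos T.triangles (Sperner2.isFan T)
    T.card_triangle ℓ hℓ
  refine ⟨by convert hodd, ?_⟩
  obtain ⟨s, hs⟩ := Finset.card_pos.1 hodd.pos
  rw [Finset.mem_filter] at hs
  exact ⟨s, hs.1, hs.2⟩
end

section
/- Sperner's lemma: for a Sperner labeling of a simplicial subdivision of an n-dimensional simplex, the number of fully labeled small n-simplices is odd; in particular there is at least one fully labeled simplex. -/
open scoped Classical

/-- A simplicial subdivision of the standard `n`-dimensional simplex:
a finite vertex set with geometric positions in the simplex, and a finite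
family of small `n`-simplices (each given by its `n+1` affinely independent
vertices) whose convex hulls cover the simplex and intersect pairwise in the
convex hull of their common vertices. -/
structure SimplicialSubdivision (n : ℕ) where
  V : Type
  [fintypeV : Fintype V]
  [decV : DecidableEq V]
  pos : V → (Fin (n + 1) → ℝ)
  pos_mem : ∀ v, pos v ∈ stdSimplex ℝ (Fin (n + 1))
  simplices : Finset (Finset V)
  card_simplex : ∀ s ∈ simplices, s.card = n + 1
  indep : ∀ s ∈ simplices, AffineIndependent ℝ (fun v : s => pos v)
  covers : (⋃ s ∈ simplices, convexHull ℝ (pos '' (s : Set V)))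
      = stdSimplex ℝ (Fin (n + 1))
  inter : ∀ s ∈ simplices, ∀ t ∈ simplices,
    convexHull ℝ (pos '' (s : Set V)) ∩ convexHull ℝ (pos '' (t : Set V))
      = convexHull ℝ (pos '' ((s ∩ t : Finset V) : Set V))


structure SpCx (n : ℕ) (V : Type) [Fintype V] where
  pos : V → (Fin (n + 1) → ℝ)
  simp : Finset (Finset V)
  nn : ∀ v k, 0 ≤ pos v k
  sum1 : ∀ v, ∑ k, pos v k = 1
  card : ∀ s ∈ simp, s.card = n + 1
  ind : ∀ s ∈ simp, ∀ a : V → ℝ, (∀ v, v ∉ s → a v = 0) → ∑ v, a v • pos v = 0 → a = 0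
  cov : ∀ x : Fin (n + 1) → ℝ, (∀ k, 0 ≤ x k) → ∃ s ∈ simp, ∃ a : V → ℝ,
    (∀ v, 0 ≤ a v) ∧ (∀ v, v ∉ s → a v = 0) ∧ ∑ v, a v • pos v = x
  int : ∀ s ∈ simp, ∀ t ∈ simp, ∀ a b : V → ℝ, (∀ v, 0 ≤ a v) → (∀ v, 0 ≤ b v) →
    (∀ v, v ∉ s → a v = 0) → (∀ v, v ∉ t → b v = 0) →
    ∑ v, a v • pos v = ∑ v, b v • pos v → a = b

namespace SpCx

set_option linter.unusedSectionVars false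

variable {n : ℕ} {V : Type} [Fintype V]

/-- the determinant of rows -/
noncomputable abbrev dt (n : ℕ) : (Fin (n + 1) → ℝ) [⋀^Fin (n + 1)]→ₗ[ℝ] ℝ :=
  Matrix.detRowAlternating

lemma sum_supp (e : Fin (n + 1) → V) (he : Function.Injective e) (a : V → ℝ)
    (ha : ∀ v, v ∉ Finset.univ.image e → a v = 0) {E : Type*} [AddCommGroup E] [Module ℝ E]
    (y : V → E) : ∑ v, a v • y v = ∑ j, a (e j) • y (e j) := by
  rw [← Finset.sum_image (s := Finset.univ) (g := e) (f := fun v => a v • y v)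
    (fun _ _ _ _ h => he h)]
  symm
  apply Finset.sum_subset (Finset.subset_univ _)
  intro v _ hv
  rw [ha v hv, zero_smul]

lemma extend_supp (e : Fin (n + 1) → V) (he : Function.Injective e) (c : Fin (n + 1) → ℝ) :
    ∃ a : V → ℝ, (∀ j, a (e j) = c j) ∧ (∀ v, v ∉ Finset.univ.image e → a v = 0) := by
  refine ⟨Function.extend e c 0, fun j => he.extend_apply _ _ _, fun v hv => ?_⟩
  rw [Function.extend_apply']
  · rfl
  · simpa using hv

variable (C : SpCx n V)

lemma inj_of_mem (e : Fin (n + 1) → V) (he : Finset.univ.image e ∈ C.simp) :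
    Function.Injective e := by
  have := C.card _ he
  rw [← Set.injOn_univ, ← Finset.coe_univ]
  apply Finset.injOn_of_card_image_eq
  simpa using this

lemma dt_ne (e : Fin (n + 1) → V) (he : Finset.univ.image e ∈ C.simp) :
    dt n (C.pos ∘ e) ≠ 0 := by
  intro h
  have hi := C.inj_of_mem e he
  obtain ⟨c, hc, h0⟩ := (Matrix.exists_vecMul_eq_zero_iff (M := Matrix.of (C.pos ∘ e))).2 h
  apply hc
  obtain ⟨a, ha, hs⟩ := extend_supp e hi c
  have := C.ind _ he a hs (by
    rw [sum_supp e hi a hs]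
    ext k
    have := congrFun h0 k
    simpa [ha, Matrix.vecMul, dotProduct] using this)
  ext j
  rw [← ha, this]; rfl

lemma exists_enum (s : Finset V) (hs : s ∈ C.simp) :
    ∃ e : Fin (n + 1) → V, Finset.univ.image e = s := by
  refine ⟨fun i => ((s.equivFinOfCardEq (C.card s hs)).symm i : V), ?_⟩
  ext v
  simp only [Finset.mem_image, Finset.mem_univ, true_and]
  constructor
  · rintro ⟨i, rfl⟩
    exact Subtype.prop _
  · intro hv
    exact ⟨s.equivFinOfCardEq (C.card s hs) ⟨v, hv⟩, by simp⟩

lemma span (s : Finset V) (hs : s ∈ C.simp) (x : Fin (n + 1) → ℝ) :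
    ∃ a : V → ℝ, (∀ v, v ∉ s → a v = 0) ∧ ∑ v, a v • C.pos v = x := by
  obtain ⟨e, rfl⟩ := C.exists_enum s hs
  have hi := C.inj_of_mem e hs
  have hd := C.dt_ne e hs
  set M : Matrix (Fin (n + 1)) (Fin (n + 1)) ℝ := Matrix.of (C.pos ∘ e) with hM
  have hu : IsUnit M.det := isUnit_iff_ne_zero.2 hd
  obtain ⟨a, ha, hz⟩ := extend_supp e hi (Matrix.vecMul x M⁻¹)
  refine ⟨a, hz, ?_⟩
  rw [sum_supp e hi a hz]
  have : Matrix.vecMul (Matrix.vecMul x M⁻¹) M = x := by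
    rw [Matrix.vecMul_vecMul, Matrix.nonsing_inv_mul _ hu, Matrix.vecMul_one]
  rw [← this]
  ext k
  simp [ha, Matrix.vecMul, dotProduct, hM]

/-- linear functional with one row replaced -/
lemma dt_sum (e : Fin (n + 1) → V) (i : Fin (n + 1)) (u : V)
    (he : Finset.univ.image (Function.update e i u) ∈ C.simp) (a : V → ℝ)
    (ha : ∀ v, v ∉ Finset.univ.image (Function.update e i u) → a v = 0) :
    dt n (Function.update (C.pos ∘ e) i (∑ v, a v • C.pos v))
      = a u * dt n (Function.update (C.pos ∘ e) i (C.pos u)) := by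
  have hi := C.inj_of_mem _ he
  rw [sum_supp _ hi a ha, AlternatingMap.map_update_sum]
  rw [Finset.sum_eq_single i]
  · simp
  · intro j _ hj
    rw [AlternatingMap.map_update_smul, Function.update_of_ne hj]
    have : C.pos (e j) = (C.pos ∘ e) j := rfl
    rw [this, AlternatingMap.map_update_self _ _ (Ne.symm hj), smul_zero]
  · simp

lemma comp_upd {X : Type*} (y : V → X) (e : Fin (n + 1) → V) (i : Fin (n + 1)) (u : V) :
    y ∘ Function.update e i u = Function.update (y ∘ e) i (y u) := by
  ext j : 1
  by_cases h : j = i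
  · subst h; simp
  · simp [h]

lemma uniq (e : Fin (n + 1) → V) (i : Fin (n + 1)) (u u' : V)
    (he : Finset.univ.image (Function.update e i u) ∈ C.simp)
    (he' : Finset.univ.image (Function.update e i u') ∈ C.simp)
    (h : 0 < dt n (C.pos ∘ Function.update e i u) * dt n (C.pos ∘ Function.update e i u')) :
    u = u' := by
  rw [comp_upd, comp_upd] at h
  obtain ⟨a, ha, hx⟩ := C.span _ he (C.pos u')
  have hL := C.dt_sum e i u he a ha
  rw [hx] at hL
  rw [hL] at h
  have hau : 0 < a u := by
    by_contra hn
    push Not at hn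
    nlinarith [mul_self_nonneg (dt n (Function.update (C.pos ∘ e) i (C.pos u)))]
  have hi := C.inj_of_mem _ he
  have hi' := C.inj_of_mem _ he'
  let f : V → ℝ := fun v => if ∃ j, j ≠ i ∧ e j = v then 1 else 0
  let M : ℝ := ∑ v, |a v|
  have hM : ∀ v, |a v| ≤ M := fun v =>
    Finset.single_le_sum (f := fun v => |a v|) (fun _ _ => abs_nonneg _) (Finset.mem_univ v)
  have hM0 : 0 ≤ M := Finset.sum_nonneg fun _ _ => abs_nonneg _
  have hf0 : ∀ v, 0 ≤ f v := by intro v; simp only [f]; split_ifs <;> norm_num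
  have hmem : ∀ w v, v ∈ Finset.univ.image (Function.update e i w) ↔
      v = w ∨ ∃ j, j ≠ i ∧ e j = v := by
    intro w v
    simp only [Finset.mem_image, Finset.mem_univ, true_and]
    constructor
    · rintro ⟨j, rfl⟩
      by_cases hj : j = i
      · subst hj; simp
      · right; exact ⟨j, hj, by simp [hj]⟩
    · rintro (rfl | ⟨j, hj, rfl⟩)
      · exact ⟨i, by simp⟩
      · exact ⟨j, by simp [hj]⟩
  have hnot : ∀ w, Finset.univ.image (Function.update e i w) ∈ C.simp →
      ¬ ∃ j, j ≠ i ∧ e j = w := by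
    rintro w hw ⟨j, hj, hjw⟩
    have := C.inj_of_mem _ hw (a₁ := j) (a₂ := i) (by simp [hj, hjw])
    exact hj this
  have key := C.int _ he _ he' (fun v => M * f v + a v) (fun v => M * f v + if v = u' then 1 else 0)
    (by
      intro v
      by_cases hv : ∃ j, j ≠ i ∧ e j = v
      · have : f v = 1 := if_pos hv
        simp only [this]
        have := hM v
        have := neg_abs_le (a v)
        linarith
      · have : f v = 0 := if_neg hv
        simp only [this]
        by_cases hvu : v = u
        · subst hvu; linarith
        · rw [ha v (by rw [hmem]; exact not_or.2 ⟨hvu, hv⟩)]; simp)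
    (by
      intro v
      have := mul_nonneg hM0 (hf0 v)
      split_ifs <;> linarith)
    (by
      intro v hv
      rw [hmem] at hv
      have h1 : f v = 0 := if_neg (not_or.1 hv).2
      simp only [h1]
      rw [ha v (by rw [hmem]; exact hv)]; simp)
    (by
      intro v hv
      rw [hmem] at hv
      have h1 : f v = 0 := if_neg (not_or.1 hv).2
      simp only [h1]
      rw [if_neg (not_or.1 hv).1]; simp)
    (by
      simp only [add_smul, Finset.sum_add_distrib, hx, ite_smul, one_smul, zero_smul]
      simp)
  have k1 := congrFun key u'
  simp only [if_true] at k1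
  by_contra hne
  have : a u' = 0 := ha u' (by
    rw [hmem]
    rintro (h | h)
    · exact hne h.symm
    · exact hnot _ he' h)
  linarith

lemma exis (e : Fin (n + 1) → V) (i : Fin (n + 1)) (u : V)
    (hno : ∀ k, ∃ j, j ≠ i ∧ C.pos (e j) k ≠ 0)
    (he : Finset.univ.image (Function.update e i u) ∈ C.simp) :
    ∃ u', Finset.univ.image (Function.update e i u') ∈ C.simp ∧
      dt n (C.pos ∘ Function.update e i u) * dt n (C.pos ∘ Function.update e i u') < 0 := by
  have hLu := C.dt_ne _ he
  have hi := C.inj_of_mem _ he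
  let F : Finset V := (Finset.univ.erase i).image e
  let f : V → ℝ := fun v => if v ∈ F then 1 else 0
  let c : Fin (n + 1) → ℝ := ∑ v, f v • C.pos v
  have hc : c = ∑ v ∈ F, C.pos v := by
    simp [c, f, ite_smul]
  have hcpos : ∀ k, 0 < c k := by
    intro k
    obtain ⟨j, hj, hk⟩ := hno k
    rw [hc, Finset.sum_apply]
    apply Finset.sum_pos' (fun v _ => C.nn v k)
    exact ⟨e j, Finset.mem_image_of_mem _ (by simp [hj]), lt_of_le_of_ne (C.nn _ _) (Ne.symm hk)⟩
  -- for all large m, m c - pos u is nonneg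
  obtain ⟨K, hK⟩ : ∃ K : ℕ, ∀ k, C.pos u k ≤ K * c k := by
    have : ∀ k, ∃ K : ℕ, C.pos u k ≤ K * c k := by
      intro k
      obtain ⟨K, hK⟩ := exists_nat_ge (C.pos u k / c k)
      exact ⟨K, by rwa [div_le_iff₀ (hcpos k)] at hK⟩
    choose Kf hKf using this
    refine ⟨∑ k, Kf k, fun k => (hKf k).trans ?_⟩
    apply mul_le_mul_of_nonneg_right _ (hcpos k).le
    exact_mod_cast Finset.single_le_sum (f := Kf) (fun _ _ => Nat.zero_le _) (Finset.mem_univ k)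
  have hcov : ∀ m : ℕ, ∃ s : {s // s ∈ C.simp}, ∃ a : V → ℝ,
    (∀ v, 0 ≤ a v) ∧ (∀ v, v ∉ s.1 → a v = 0) ∧
      ∑ v, a v • C.pos v = ((m + K : ℕ) : ℝ) • c - C.pos u := by
    intro m
    obtain ⟨s, hs, a, h⟩ := C.cov (((m + K : ℕ) : ℝ) • c - C.pos u) (by
      intro k
      have := hK k
      have h2 : 0 ≤ (m : ℝ) * c k := mul_nonneg (Nat.cast_nonneg _) (hcpos k).le
      simp only [Pi.sub_apply, Pi.smul_apply, smul_eq_mul]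
      push_cast
      linarith)
    exact ⟨⟨s, hs⟩, a, h⟩
  choose sm am ham0 ham1 ham2 using hcov
  obtain ⟨⟨t, ht⟩, htinf⟩ := Finite.exists_infinite_fiber sm
  have htinf' : (sm ⁻¹' {⟨t, ht⟩}).Infinite := Set.infinite_coe_iff.1 htinf
  obtain ⟨γ, hγ, hγc⟩ := C.span t ht c
  obtain ⟨d, hd, hdu⟩ := C.span t ht (C.pos u)
  have ham : ∀ m, sm m = ⟨t, ht⟩ → ∀ v, am m v = (m + K : ℕ) * γ v - d v := by
    intro m hm v
    have h1 := C.ind t ht (fun v => am m v - ((m + K : ℕ) * γ v - d v)) (by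
      intro v hv
      have := ham1 m v (by rw [hm]; exact hv)
      simp [this, hγ v hv, hd v hv]) (by
      simp only [sub_smul, Finset.sum_sub_distrib, mul_smul, ← Finset.smul_sum]
      rw [ham2, hγc, hdu]; simp)
    have := congrFun h1 v
    simp only [Pi.zero_apply] at this
    linarith
  have hγ0 : ∀ v, 0 ≤ γ v := by
    intro v
    by_contra hneg
    push Not at hneg
    obtain ⟨N, hN⟩ := exists_nat_gt (d v / γ v)
    obtain ⟨m, hm, hmN⟩ := htinf'.exists_gt N
    have h1 := ham m hm v
    have h2 := ham0 m v
    rw [div_lt_iff_of_neg hneg] at hN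
    have h3 : (N : ℝ) ≤ (m + K : ℕ) := by exact_mod_cast (by omega)
    nlinarith
  have hFsub : F ⊆ Finset.univ.image (Function.update e i u) := by
    intro v hv
    obtain ⟨j, hj, rfl⟩ := Finset.mem_image.1 hv
    have hj' : j ≠ i := by simpa using hj
    exact Finset.mem_image.2 ⟨j, Finset.mem_univ _, by simp [hj']⟩
  have hγf := C.int t ht _ he γ f hγ0 (by intro v; simp only [f]; split_ifs <;> norm_num) hγ
    (fun v hv => if_neg (fun h => hv (hFsub h))) hγc
  have hFt : F ⊆ t := by
    intro v hv
    by_contra hvt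
    have := hγ v hvt
    rw [hγf] at this
    simp [f, hv] at this
  have hFcard : F.card = n := by
    rw [Finset.card_image_of_injOn]
    · simp
    · intro j hj j' hj' hjj
      have h1 : j ≠ i := by simpa using hj
      have h2 : j' ≠ i := by simpa using hj'
      exact hi (by simp [h1, h2, hjj])
  obtain ⟨u', hu't, hu'F⟩ : ∃ u' ∈ t, u' ∉ F := by
    apply Finset.exists_mem_notMem_of_card_lt_card
    rw [hFcard, C.card t ht]; omega
  have himg : Finset.univ.image (Function.update e i u') = t := by
    have h1 : Finset.univ.image (Function.update e i u') = insert u' F := by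
      ext v
      simp only [Finset.mem_image, Finset.mem_univ, true_and, Finset.mem_insert, F, Finset.mem_erase]
      constructor
      · rintro ⟨j, rfl⟩
        by_cases hj : j = i
        · subst hj; simp
        · right; exact ⟨j, ⟨hj, trivial⟩, by simp [hj]⟩
      · rintro (rfl | ⟨j, ⟨hj, -⟩, rfl⟩)
        · exact ⟨i, by simp⟩
        · exact ⟨j, by simp [hj]⟩
    rw [h1]
    apply Finset.eq_of_subset_of_card_le
    · intro v hv
      rcases Finset.mem_insert.1 hv with rfl | hv
      · exact hu't
      · exact hFt hv
    · rw [Finset.card_insert_of_notMem hu'F, hFcard, C.card t ht]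
  have he' : Finset.univ.image (Function.update e i u') ∈ C.simp := himg ▸ ht
  refine ⟨u', he', ?_⟩
  obtain ⟨m, hm⟩ := htinf'.nonempty
  have hd' := C.dt_sum e i u' he' d (by rw [himg]; exact hd)
  rw [hdu] at hd'
  have hdle : d u' ≤ 0 := by
    have h1 := ham m hm u'
    have h2 := ham0 m u'
    have h3 : γ u' = 0 := by rw [hγf]; exact if_neg hu'F
    rw [h3] at h1
    linarith
  have hLu' := C.dt_ne _ he'
  rw [comp_upd] at hLu hLu' ⊢
  rw [comp_upd]
  rw [hd'] at hLu ⊢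
  have hdne : d u' ≠ 0 := left_ne_zero_of_mul hLu
  have hdlt := lt_of_le_of_ne hdle hdne
  have := mul_self_pos.2 hLu'
  nlinarith

/-- signed indicator -/
noncomputable def sg (e : Fin (n + 1) → V) : ℝ :=
  if Finset.univ.image e ∈ C.simp then (SignType.sign (dt n (C.pos ∘ e)) : ℝ) else 0

lemma cancel (e : Fin (n + 1) → V) (i : Fin (n + 1))
    (hno : ∀ k, ∃ j, j ≠ i ∧ C.pos (e j) k ≠ 0) :
    ∑ u, C.sg (Function.update e i u) = 0 := by
  by_cases hex : ∃ u, Finset.univ.image (Function.update e i u) ∈ C.simp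
  · obtain ⟨u, hu⟩ := hex
    obtain ⟨u', hu', hneg⟩ := C.exis e i u hno hu
    have hne : u ≠ u' := by
      rintro rfl
      nlinarith [mul_self_nonneg (dt n (C.pos ∘ Function.update e i u))]
    rw [← Finset.sum_subset (Finset.subset_univ {u, u'})]
    · rw [Finset.sum_pair hne, sg, sg, if_pos hu, if_pos hu']
      rcases mul_neg_iff.1 hneg with ⟨h1, h2⟩ | ⟨h1, h2⟩
      · rw [sign_pos h1, sign_neg h2]; simp
      · rw [sign_pos h2, sign_neg h1]; simp
    · intro w _ hw
      rw [sg, if_neg]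
      intro hw'
      have hwne := C.dt_ne _ hw'
      simp only [Finset.mem_insert, Finset.mem_singleton, not_or] at hw
      rcases mul_neg_iff.1 hneg with ⟨h1, h2⟩ | ⟨h1, h2⟩ <;>
      rcases lt_or_gt_of_ne hwne with h3 | h3
      · exact hw.2 (C.uniq e i w u' hw' hu' (mul_pos_of_neg_of_neg h3 h2))
      · exact hw.1 (C.uniq e i w u hw' hu (mul_pos h3 h1))
      · exact hw.1 (C.uniq e i w u hw' hu (mul_pos_of_neg_of_neg h3 h1))
      · exact hw.2 (C.uniq e i w u' hw' hu' (mul_pos h3 h2))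
  · push Not at hex
    exact Finset.sum_eq_zero fun u _ => if_neg (hex u)

/-- the signed volume -/
noncomputable def vol (y : V → (Fin (n + 1) → ℝ)) : ℝ :=
  ∑ e : Fin (n + 1) → V, C.sg e * dt n (y ∘ e)

lemma cramer_id (R : Fin (n + 1) → Fin (n + 1) → ℝ) (j : Fin (n + 1)) (z : Fin (n + 1) → ℝ)
    (hj : ∑ k, R j k = 0) (hR : ∀ i, i ≠ j → ∑ k, R i k = 1) (hz : ∑ k, z k = 1) :
    dt n R = ∑ i ∈ Finset.univ.erase j, dt n (Function.update R i z) := by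
  have h := Matrix.mulVec_cramer (Matrix.of R).transpose z
  have h1 : ∀ i, Matrix.cramer (Matrix.of R).transpose z i = dt n (Function.update R i z) := by
    intro i
    rw [Matrix.cramer_transpose_apply]; rfl
  have h2 := congrArg (fun x : Fin (n + 1) → ℝ => ∑ k, x k) h
  simp only [Matrix.mulVec, dotProduct, h1, Matrix.transpose_apply, Matrix.of_apply,
    Matrix.det_transpose, Pi.smul_apply, smul_eq_mul] at h2
  rw [Finset.sum_comm] at h2
  simp only [← Finset.sum_mul, ← Finset.mul_sum, hz, mul_one] at h2
  rw [← Finset.add_sum_erase _ _ (Finset.mem_univ j), hj, zero_mul, zero_add] at h2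
  rw [show dt n R = (Matrix.of R).det from rfl, ← h2]
  refine Finset.sum_congr rfl fun i hi => ?_
  rw [hR i (Finset.ne_of_mem_erase hi), one_mul]

lemma group_zero (i : Fin (n + 1)) (v : V) (H : (Fin (n + 1) → V) → ℝ)
    (hH : ∀ e u, H (Function.update e i u) = H e)
    (h0 : ∀ e, (∃ k, ∀ j, j ≠ i → C.pos (e j) k = 0) → H e = 0) :
    ∑ e, C.sg e * H e = 0 := by
  rw [← (Fin.insertNthEquiv (fun _ => V) i).sum_comp, Fintype.sum_prod_type_right]
  apply Finset.sum_eq_zero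
  intro r _
  have h1 : ∀ u, Fin.insertNthEquiv (fun _ => V) i (u, r)
      = Function.update (Fin.insertNthEquiv (fun _ => V) i (v, r)) i u := by
    intro u
    simp [Fin.insertNthEquiv]
  set e0 : Fin (n + 1) → V := Fin.insertNthEquiv (fun _ => V) i (v, r)
  simp only [h1, hH, ← Finset.sum_mul]
  by_cases hk : ∃ k, ∀ j, j ≠ i → C.pos (e0 j) k = 0
  · rw [h0 _ hk, mul_zero]
  · push Not at hk
    rw [C.cancel e0 i hk, zero_mul]

lemma vol_step (y : V → (Fin (n + 1) → ℝ)) (v : V) (z : Fin (n + 1) → ℝ)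
    (hy : ∀ u k, C.pos u k = 0 → y u k = 0) (hy1 : ∀ u, ∑ k, y u k = 1)
    (hz : ∀ k, C.pos v k = 0 → z k = 0) (hz1 : ∑ k, z k = 1) :
    C.vol (Function.update y v z) = C.vol y := by
  rw [← sub_eq_zero, vol, vol, ← Finset.sum_sub_distrib]
  have key : ∀ e : Fin (n + 1) → V,
      C.sg e * dt n (Function.update y v z ∘ e) - C.sg e * dt n (y ∘ e)
      = ∑ j, ∑ i ∈ Finset.univ.erase j, C.sg e * (if e j = v then
          dt n (Function.update (Function.update (y ∘ e) j (z - y v)) i (y v)) else 0) := by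
    intro e
    by_cases he : Finset.univ.image e ∈ C.simp
    swap
    · simp [sg, he]
    have hi := C.inj_of_mem e he
    simp only [← Finset.mul_sum, ← mul_sub]
    congr 1
    by_cases hv : ∃ j, e j = v
    · obtain ⟨j, rfl⟩ := hv
      rw [Finset.sum_eq_single j]
      · simp only [if_true]
        rw [← cramer_id _ j]
        · have h1 : Function.update y (e j) z ∘ e = Function.update (y ∘ e) j z :=
            Function.update_comp_eq_of_injective y hi j z
          rw [h1, AlternatingMap.map_update_sub]
          congr 2
          exact (Function.update_eq_self j (y ∘ e)).symm
        · simp [hz1, hy1]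
        · intro i hij
          simp [hij, hy1]
        · exact hy1 _
      · intro i _ hij
        have hne : e i ≠ e j := fun h => hij (hi h)
        simp only [if_neg hne, Finset.sum_const_zero]
      · simp
    · push Not at hv
      have : Function.update y v z ∘ e = y ∘ e := by
        ext j : 1
        simp [hv j]
      simp [this, hv]
  simp only [key]
  rw [Finset.sum_comm]
  apply Finset.sum_eq_zero
  intro j _
  rw [Finset.sum_comm]
  apply Finset.sum_eq_zero
  intro i hij
  have hij := Finset.ne_of_mem_erase hij
  apply C.group_zero i v
  · intro e u
    rw [Function.update_of_ne hij.symm]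
    split_ifs with h
    · rw [comp_upd, Function.update_comm hij, Function.update_idem]
    · rfl
  · rintro e ⟨k, hk⟩
    split_ifs with h
    · subst h
      have hvk := hk j hij.symm
      apply Matrix.det_eq_zero_of_column_eq_zero k
      intro l
      by_cases hl : l = i
      · subst hl; simp [hy _ _ hvk]
      · by_cases hl2 : l = j
        · subst hl2; simp [hl, hy _ _ hvk, hz _ hvk]
        · simp [hl, hl2, hy _ _ (hk l hl)]
    · rfl

lemma vol_eq (y : V → (Fin (n + 1) → ℝ))
    (hy : ∀ u k, C.pos u k = 0 → y u k = 0) (hy1 : ∀ u, ∑ k, y u k = 1) :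
    C.vol y = C.vol C.pos := by
  have : ∀ A : Finset V, C.vol (fun v => if v ∈ A then y v else C.pos v) = C.vol C.pos := by
    intro A
    induction A using Finset.induction_on with
    | empty => simp
    | insert v A hv ih =>
      have h1 := C.vol_step (fun v => if v ∈ A then y v else C.pos v) v (y v) (by
        intro u k hk
        by_cases h : u ∈ A
        · simp [h, hy u k hk]
        · simp [h, hk]) (by
        intro u
        by_cases h : u ∈ A
        · simp [h, hy1]
        · simp [h, C.sum1]) (hy v) (hy1 v)
      rw [← ih, ← h1]
      congr 1
      ext u : 1
      by_cases h : u = v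
      · subst h; simp
      · simp [h]
  simpa using this Finset.univ

end SpCx

namespace SpCx

variable {n : ℕ} {V : Type} [Fintype V] (C : SpCx n V)

lemma perm_inv (y : V → (Fin (n + 1) → ℝ)) (e : Fin (n + 1) → V)
    (σ : Equiv.Perm (Fin (n + 1))) :
    C.sg (e ∘ σ) * dt n (y ∘ (e ∘ σ)) = C.sg e * dt n (y ∘ e) := by
  have himg : Finset.univ.image (e ∘ σ) = Finset.univ.image e := by
    rw [← Finset.image_image, Finset.image_univ_equiv]
  have h : ∀ z : V → (Fin (n + 1) → ℝ), dt n (z ∘ (e ∘ σ)) = (Equiv.Perm.sign σ) • dt n (z ∘ e) :=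
    fun z => AlternatingMap.map_perm (dt n) (z ∘ e) σ
  rw [sg, sg, himg, h, h]
  split_ifs
  · rcases Int.units_eq_one_or (Equiv.Perm.sign σ) with h1 | h1
    · rw [h1]; simp
    · rw [h1]; simp [Left.sign_neg]
  · simp

lemma vol_fiber (y : V → (Fin (n + 1) → ℝ)) (E : Finset V → (Fin (n + 1) → V))
    (hE : ∀ s ∈ C.simp, Finset.univ.image (E s) = s) :
    C.vol y = (Nat.factorial (n + 1) : ℝ) * ∑ s ∈ C.simp, C.sg (E s) * dt n (y ∘ E s) := by
  rw [vol, ← Finset.sum_subset (Finset.subset_univ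
    (Finset.univ.filter fun e : Fin (n + 1) → V => Finset.univ.image e ∈ C.simp))]
  swap
  · intro e _ he
    have : Finset.univ.image e ∉ C.simp := by simpa using he
    rw [sg, if_neg this, zero_mul]
  rw [← Finset.sum_fiberwise_of_maps_to (t := C.simp) (g := fun e => Finset.univ.image e)
    (by intro e he; exact (Finset.mem_filter.1 he).2), Finset.mul_sum]
  refine Finset.sum_congr rfl fun s hs => ?_
  have hEs := hE s hs
  have hmem : Finset.univ.image (E s) ∈ C.simp := hEs.symm ▸ hs
  have hinj := C.inj_of_mem _ hmem
  have : ∑ σ : Equiv.Perm (Fin (n + 1)), C.sg (E s ∘ σ) * dt n (y ∘ (E s ∘ σ))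
      = (Nat.factorial (n + 1) : ℝ) * (C.sg (E s) * dt n (y ∘ E s)) := by
    simp only [C.perm_inv]
    rw [Finset.sum_const, Finset.card_univ, Fintype.card_perm, Fintype.card_fin, nsmul_eq_mul]
  rw [← this]
  symm
  apply Finset.sum_bij (fun (σ : Equiv.Perm (Fin (n + 1))) _ => E s ∘ σ)
  · intro σ _
    have : Finset.univ.image (E s ∘ σ) = s := by
      rw [← Finset.image_image, Finset.image_univ_equiv, hEs]
    simp only [Finset.mem_filter, Finset.mem_univ, true_and, this, hs]
  · intro σ _ τ _ h
    ext j : 1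
    exact hinj (congrFun h j)
  · intro e he
    have he2 : Finset.univ.image e = s := (Finset.mem_filter.1 he).2
    have hei := C.inj_of_mem e (he2.symm ▸ hs)
    have : ∀ j, ∃ i, E s i = e j := by
      intro j
      have : e j ∈ Finset.univ.image (E s) := by
        rw [hEs, ← he2]; exact Finset.mem_image_of_mem _ (Finset.mem_univ _)
      simpa using this
    choose σ hσ using this
    have hσi : Function.Injective σ := by
      intro a b hab
      apply hei
      rw [← hσ, ← hσ, hab]
    refine ⟨Equiv.ofBijective σ (Finite.injective_iff_bijective.1 hσi), Finset.mem_univ _, ?_⟩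
    ext j : 1
    exact hσ j
  · intro σ _
    rfl

open MeasureTheory in
lemma sum_det (E : Finset V → (Fin (n + 1) → V))
    (hE : ∀ s ∈ C.simp, Finset.univ.image (E s) = s) :
    ∑ s ∈ C.simp, |dt n (C.pos ∘ E s)| = 1 := by
  let K : Set (Fin (n + 1) → ℝ) := {x | (∀ k, 0 ≤ x k) ∧ ∑ k, x k ≤ 1}
  have hKclosed : IsClosed K := by
    have h1 : IsClosed {x : Fin (n + 1) → ℝ | ∀ k, 0 ≤ x k} := by
      simp only [Set.ofPred_forall]
      exact isClosed_iInter fun k => isClosed_le continuous_const (continuous_apply k)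
    have h2 : IsClosed {x : Fin (n + 1) → ℝ | ∑ k, x k ≤ 1} :=
      isClosed_le (continuous_finsetSum _ fun k _ => continuous_apply k) continuous_const
    exact h1.inter h2
  have hKsub : K ⊆ Set.Icc 0 1 := by
    rintro x ⟨h0, h1⟩
    refine ⟨h0, fun k => ?_⟩
    exact (Finset.single_le_sum (f := x) (fun i _ => h0 i) (Finset.mem_univ k)).trans h1
  have hKcomp : IsCompact K := isCompact_Icc.of_isClosed_subset hKclosed hKsub
  have hKfin : volume K ≠ ⊤ := hKcomp.measure_lt_top.ne
  have hKpos : volume K ≠ 0 := by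
    have : (Set.univ.pi fun _ : Fin (n + 1) => Set.Ioo (0 : ℝ) (1 / (n + 1))) ⊆ K := by
      intro x hx
      have hx' : ∀ k, 0 < x k ∧ x k < 1 / (n + 1) := fun k => hx k (Set.mem_univ k)
      refine ⟨fun k => (hx' k).1.le, ?_⟩
      calc ∑ k, x k ≤ ∑ k : Fin (n + 1), (1 / (n + 1) : ℝ) :=
            Finset.sum_le_sum fun k _ => (hx' k).2.le
        _ = 1 := by
            rw [Finset.sum_const, Finset.card_univ, Fintype.card_fin, nsmul_eq_mul]
            push_cast
            field_simp
    have hop : IsOpen (Set.univ.pi fun _ : Fin (n + 1) => Set.Ioo (0 : ℝ) (1 / (n + 1))) :=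
      isOpen_set_pi Set.finite_univ fun _ _ => isOpen_Ioo
    have hne : (Set.univ.pi fun _ : Fin (n + 1) => Set.Ioo (0 : ℝ) (1 / (n + 1))).Nonempty := by
      rw [Set.univ_pi_nonempty_iff]
      intro _
      exact Set.nonempty_Ioo.2 (by positivity)
    exact ((hop.measure_pos volume hne).trans_le (measure_mono this)).ne'
  let A : Finset V → ((Fin (n + 1) → ℝ) →ₗ[ℝ] (Fin (n + 1) → ℝ)) := fun s =>
    Matrix.toLin' (Matrix.of (C.pos ∘ E s)).transpose
  have hA : ∀ s x, A s x = ∑ j, x j • C.pos (E s j) := by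
    intro s x
    ext k
    simp [A, Matrix.mulVec, dotProduct, mul_comm]
  have hAdet : ∀ s, LinearMap.det (A s) = dt n (C.pos ∘ E s) := by
    intro s
    simp only [A]
    rw [LinearMap.det_toLin', Matrix.det_transpose]
    rfl
  have hmem : ∀ s ∈ C.simp, Finset.univ.image (E s) ∈ C.simp := fun s hs => (hE s hs).symm ▸ hs
  have hsumA : ∀ a : V → ℝ, ∑ k, (∑ v, a v • C.pos v) k = ∑ v, a v := by
    intro a
    simp only [Finset.sum_apply, Pi.smul_apply, smul_eq_mul]
    rw [Finset.sum_comm]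
    simp [← Finset.mul_sum, C.sum1]
  -- description of the image
  have himg : ∀ s ∈ C.simp, ∀ x, x ∈ A s '' K ↔ ∃ a : V → ℝ, (∀ v, 0 ≤ a v) ∧
      (∀ v, v ∉ s → a v = 0) ∧ ∑ v, a v ≤ 1 ∧ ∑ v, a v • C.pos v = x := by
    intro s hs x
    have hi := C.inj_of_mem _ (hmem s hs)
    constructor
    · rintro ⟨c, ⟨hc0, hc1⟩, rfl⟩
      obtain ⟨a, ha, hz⟩ := extend_supp (E s) hi c
      have hpos : ∑ v, a v • C.pos v = A s c := by
        rw [sum_supp _ hi a hz, hA]; simp only [ha]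
      have hsum : ∑ v, a v = ∑ j, c j := by
        have := sum_supp _ hi a hz (fun _ => (1 : ℝ))
        simpa [ha] using this
      refine ⟨a, ?_, ?_, by rw [hsum]; exact hc1, hpos⟩
      · intro v
        by_cases hv : v ∈ Finset.univ.image (E s)
        · obtain ⟨j, -, rfl⟩ := Finset.mem_image.1 hv
          rw [ha]; exact hc0 j
        · rw [hz v hv]
      · rw [← hE s hs]; exact hz
    · rintro ⟨a, ha0, has, ha1, rfl⟩
      have hz : ∀ v, v ∉ Finset.univ.image (E s) → a v = 0 := by rw [hE s hs]; exact has
      refine ⟨fun j => a (E s j), ⟨fun j => ha0 _, ?_⟩, ?_⟩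
      · have := sum_supp _ hi a hz (fun _ => (1 : ℝ))
        simp only [smul_eq_mul, mul_one] at this
        rw [← this]; exact ha1
      · rw [hA, sum_supp _ hi a hz]
  have hunion : K = ⋃ s ∈ C.simp, A s '' K := by
    ext x
    simp only [Set.mem_iUnion, exists_prop]
    constructor
    · rintro ⟨h0, h1⟩
      obtain ⟨s, hs, a, ha0, has, rfl⟩ := C.cov x h0
      refine ⟨s, hs, (himg s hs _).2 ⟨a, ha0, has, ?_, rfl⟩⟩
      rwa [hsumA] at h1
    · rintro ⟨s, hs, hx⟩
      obtain ⟨a, ha0, has, ha1, rfl⟩ := (himg s hs x).1 hx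
      refine ⟨fun k => ?_, by rwa [hsumA]⟩
      rw [Finset.sum_apply]
      exact Finset.sum_nonneg fun v _ => mul_nonneg (ha0 v) (C.nn v k)
  have hdisj : Set.Pairwise (C.simp : Set (Finset V))
      (Function.onFun (AEDisjoint volume) fun s => A s '' K) := by
    intro s hs t ht hst
    have hs' : s ∈ C.simp := hs
    have ht' : t ∈ C.simp := ht
    obtain ⟨v, hvs, hvt⟩ : ∃ v ∈ s, v ∉ t := by
      by_contra hcon
      push Not at hcon
      apply hst
      apply Finset.eq_of_subset_of_card_le hcon
      rw [C.card s hs', C.card t ht']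
    rw [← hE s hs'] at hvs
    obtain ⟨j, -, rfl⟩ := Finset.mem_image.1 hvs
    -- the proper subspace
    let W : Submodule ℝ (Fin (n + 1) → ℝ) :=
      LinearMap.ker ((dt n).toMultilinearMap.toLinearMap (C.pos ∘ E s) j)
    have hW : ∀ x, x ∈ W ↔ dt n (Function.update (C.pos ∘ E s) j x) = 0 := fun x => Iff.rfl
    have hWtop : W ≠ ⊤ := by
      intro h
      have h1 : C.pos (E s j) ∈ W := h ▸ Submodule.mem_top
      rw [hW] at h1
      have h2 : Function.update (C.pos ∘ E s) j (C.pos (E s j)) = C.pos ∘ E s :=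
        Function.update_eq_self j (C.pos ∘ E s)
      rw [h2] at h1
      exact C.dt_ne _ (hmem s hs') h1
    refine measure_mono_null ?_ (Measure.addHaar_submodule volume W hWtop)
    rintro x ⟨hx1, hx2⟩
    obtain ⟨a, ha0, has, -, hax⟩ := (himg s hs' x).1 hx1
    obtain ⟨b, hb0, hbs, -, hbx⟩ := (himg t ht' x).1 hx2
    have hab := C.int s hs' t ht' a b ha0 hb0 has hbs (hax.trans hbx.symm)
    have hav : a (E s j) = 0 := by rw [hab]; exact hbs _ hvt
    have hu : Function.update (E s) j (E s j) = E s := Function.update_eq_self _ _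
    have := C.dt_sum (E s) j (E s j) (by rw [hu]; exact hmem s hs') a
      (by rw [hu, hE s hs']; exact has)
    rw [hax, hav, zero_mul] at this
    exact (hW x).2 this
  have hmeas : volume K = ∑ s ∈ C.simp, volume (A s '' K) := by
    conv_lhs => rw [hunion]
    refine measure_biUnion_finset₀ hdisj fun s _ => ?_
    exact (hKcomp.image (LinearMap.continuous_of_finiteDimensional (A s))).isClosed.measurableSet.nullMeasurableSet
  simp only [Measure.addHaar_image_linearMap, hAdet, ← Finset.sum_mul] at hmeas
  rw [← ENNReal.ofReal_sum_of_nonneg (fun _ _ => abs_nonneg _)] at hmeas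
  have h1 : ENNReal.ofReal (∑ s ∈ C.simp, |dt n (C.pos ∘ E s)|) = 1 := by
    have h2 : 1 * volume K = ENNReal.ofReal (∑ s ∈ C.simp, |dt n (C.pos ∘ E s)|) * volume K := by
      rw [one_mul]; exact hmeas
    exact ((ENNReal.mul_left_inj hKpos hKfin).1 h2).symm
  exact ENNReal.ofReal_eq_one.1 h1

lemma det_label (p : Fin (n + 1) → Fin (n + 1)) :
    ∃ k : ℤ, dt n (fun i => Pi.single (p i) 1) = k ∧
      ((k : ZMod 2) = if Function.Surjective p then 1 else 0) := by
  by_cases hp : Function.Surjective p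
  · have hb := Finite.surjective_iff_bijective.1 hp
    let σ : Equiv.Perm (Fin (n + 1)) := Equiv.ofBijective p hb
    refine ⟨(Equiv.Perm.sign σ : ℤ), ?_, ?_⟩
    · have h := AlternatingMap.map_perm (dt n) (fun i => Pi.single i (1 : ℝ)) σ
      have h1 : dt n (fun i => Pi.single i (1 : ℝ)) = 1 := by
        have : (Matrix.of fun i : Fin (n + 1) => Pi.single i (1 : ℝ)) = 1 := by
          ext i j
          simp [Matrix.one_apply, Pi.single_apply, eq_comm]
        have h2 := congrArg Matrix.det this
        rw [Matrix.det_one] at h2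
        exact h2
      rw [h1] at h
      refine Eq.trans h ?_
      rcases Int.units_eq_one_or (Equiv.Perm.sign σ) with h1 | h1 <;> simp [h1]
    · rw [if_pos hp]
      rcases Int.units_eq_one_or (Equiv.Perm.sign σ) with h1 | h1 <;> simp [h1]
  · refine ⟨0, ?_, by simp [hp]⟩
    have hi : ¬ Function.Injective p := fun h => hp (Finite.injective_iff_surjective.1 h)
    simp only [Function.Injective, not_forall] at hi
    obtain ⟨a, b, hab, hne⟩ := hi
    rw [Int.cast_zero]
    exact (dt n).map_eq_zero_of_eq _ (by rw [hab]) hne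

theorem main (l : V → Fin (n + 1)) (hl : ∀ v, C.pos v (l v) ≠ 0) :
    Odd ((C.simp.filter (fun s => ∀ k : Fin (n + 1), ∃ v ∈ s, l v = k)).card) := by
  have hex : ∀ s : Finset V, ∃ e : Fin (n + 1) → V, s ∈ C.simp → Finset.univ.image e = s := by
    intro s
    by_cases hs : s ∈ C.simp
    · obtain ⟨e, he⟩ := C.exists_enum s hs
      exact ⟨e, fun _ => he⟩
    · obtain ⟨t, ht, -⟩ := C.cov 0 (fun _ => le_rfl)
      obtain ⟨e, he⟩ := C.exists_enum t ht
      exact ⟨e, fun h => absurd h hs⟩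
  choose E hE using hex
  let y : V → (Fin (n + 1) → ℝ) := fun v => Pi.single (l v) 1
  have hv := C.vol_eq y (by
    intro u k hk
    have : k ≠ l u := by rintro rfl; exact hl u hk
    simp [y, this]) (by intro u; simp [y])
  rw [C.vol_fiber _ E hE, C.vol_fiber _ E hE] at hv
  have hfac : (Nat.factorial (n + 1) : ℝ) ≠ 0 := by exact_mod_cast Nat.factorial_ne_zero _
  have hv := mul_left_cancel₀ hfac hv
  have h1 : ∑ s ∈ C.simp, C.sg (E s) * dt n (C.pos ∘ E s) = 1 := by
    rw [← C.sum_det E hE]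
    refine Finset.sum_congr rfl fun s hs => ?_
    rw [sg, if_pos (by rw [hE s hs]; exact hs), sign_mul_self]
  rw [h1] at hv
  have h2 : ∀ s, ∃ k : ℤ, s ∈ C.simp → C.sg (E s) * dt n (y ∘ E s) = k ∧
      ((k : ZMod 2) = if (∀ k : Fin (n + 1), ∃ v ∈ s, l v = k) then 1 else 0) := by
    intro s
    obtain ⟨k, hk, hk2⟩ := det_label (n := n) (l ∘ E s)
    refine ⟨(SignType.sign (dt n (C.pos ∘ E s)) : ℤ) * k, fun hs => ?_⟩
    have hm : Finset.univ.image (E s) ∈ C.simp := by rw [hE s hs]; exact hs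
    have hy : y ∘ E s = fun i => Pi.single ((l ∘ E s) i) 1 := rfl
    have hiff : Function.Surjective (l ∘ E s) ↔ ∀ k : Fin (n + 1), ∃ v ∈ s, l v = k := by
      conv_rhs => rw [← hE s hs]
      simp [Function.Surjective]
    rw [sg, if_pos hm, hy, hk]
    rcases lt_or_gt_of_ne (C.dt_ne _ hm) with h | h
    · rw [sign_neg h]
      refine ⟨by simp, ?_⟩
      rw [← if_congr hiff rfl rfl, ← hk2]
      simp
    · rw [sign_pos h]
      refine ⟨by simp, ?_⟩
      rw [← if_congr hiff rfl rfl, ← hk2]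
      simp
  choose k hk using h2
  have h3 : ∑ s ∈ C.simp, k s = 1 := by
    rw [Finset.sum_congr rfl fun s hs => (hk s hs).1] at hv
    exact_mod_cast hv
  have h4 := congrArg (Int.cast : ℤ → ZMod 2) h3
  rw [Int.cast_sum, Finset.sum_congr rfl fun s hs => (hk s hs).2, Finset.sum_boole,
    Int.cast_one] at h4
  exact (ZMod.natCast_eq_one_iff_odd).1 h4

end SpCx

section bridge

variable {n : ℕ} {V : Type} [Fintype V]

lemma sp_hull (pos : V → (Fin (n + 1) → ℝ)) (s : Set V) (x : Fin (n + 1) → ℝ) :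
    x ∈ convexHull ℝ (pos '' s) ↔ ∃ a : V → ℝ, (∀ v, 0 ≤ a v) ∧ (∀ v, v ∉ s → a v = 0) ∧
      ∑ v, a v = 1 ∧ ∑ v, a v • pos v = x := by
  constructor
  · intro hx
    refine convexHull_min (t := {x | ∃ a : V → ℝ, (∀ v, 0 ≤ a v) ∧ (∀ v, v ∉ s → a v = 0) ∧
      ∑ v, a v = 1 ∧ ∑ v, a v • pos v = x}) ?_ ?_ hx
    · rintro _ ⟨v, hv, rfl⟩
      refine ⟨Pi.single v 1, fun w => ?_, fun w hw => ?_, by simp, ?_⟩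
      · by_cases h : w = v
        · subst h; simp
        · simp [h]
      · have : w ≠ v := by rintro rfl; exact hw hv
        simp [this]
      · simp [Pi.single_apply, ite_smul]
    · rintro _ ⟨a, ha0, has, ha1, rfl⟩ _ ⟨b, hb0, hbs, hb1, rfl⟩ p q hp hq hpq
      refine ⟨fun v => p * a v + q * b v, fun v => ?_, fun v hv => ?_, ?_, ?_⟩
      · exact add_nonneg (mul_nonneg hp (ha0 v)) (mul_nonneg hq (hb0 v))
      · simp [has v hv, hbs v hv]
      · rw [Finset.sum_add_distrib, ← Finset.mul_sum, ← Finset.mul_sum, ha1, hb1]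
        simpa using hpq
      · simp only [add_smul, mul_smul, Finset.sum_add_distrib, ← Finset.smul_sum]
  · rintro ⟨a, ha0, has, ha1, rfl⟩
    have hsub : ∀ v, v ∉ Finset.univ.filter (· ∈ s) → a v = 0 := fun v hv => has v (by simpa using hv)
    rw [← Finset.sum_subset (Finset.subset_univ (Finset.univ.filter (· ∈ s)))
      (fun v _ hv => by rw [hsub v hv, zero_smul])]
    rw [← Finset.sum_subset (Finset.subset_univ (Finset.univ.filter (· ∈ s)))
      (fun v _ hv => hsub v hv)] at ha1
    refine (convex_convexHull ℝ (pos '' s)).sum_mem (fun v _ => ha0 v) ha1 fun v hv => ?_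
    exact subset_convexHull ℝ _ ⟨v, by simpa using hv, rfl⟩

lemma sp_sum (pos : V → (Fin (n + 1) → ℝ)) (h : ∀ v, ∑ k, pos v k = 1) (a : V → ℝ) :
    ∑ k, (∑ v, a v • pos v) k = ∑ v, a v := by
  simp only [Finset.sum_apply, Pi.smul_apply, smul_eq_mul]
  rw [Finset.sum_comm]
  simp [← Finset.mul_sum, h]

lemma sp_ind (pos : V → (Fin (n + 1) → ℝ)) (h : ∀ v, ∑ k, pos v k = 1) (s : Finset V)
    (hs : AffineIndependent ℝ (fun v : s => pos v)) (a : V → ℝ) (ha : ∀ v, v ∉ s → a v = 0)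
    (h0 : ∑ v, a v • pos v = 0) : a = 0 := by
  have h1 : ∑ v, a v = 0 := by rw [← sp_sum pos h, h0]; simp
  rw [← Finset.sum_subset (Finset.subset_univ s) (fun v _ hv => ha v hv),
    ← Finset.sum_coe_sort] at h1
  rw [← Finset.sum_subset (Finset.subset_univ s) (fun v _ hv => by rw [ha v hv, zero_smul]),
    ← Finset.sum_coe_sort] at h0
  have h2 := affineIndependent_iff.1 hs Finset.univ (fun v => a v) h1 h0
  ext v
  by_cases hv : v ∈ s
  · exact h2 ⟨v, hv⟩ (Finset.mem_univ _)
  · exact ha v hv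

/-- The linear data attached to a subdivision. -/
noncomputable def SimplicialSubdivision.toSpCx (S : SimplicialSubdivision n) :
    @SpCx n S.V S.fintypeV :=
  letI := S.fintypeV
  have hsum : ∀ v, ∑ k, S.pos v k = 1 := fun v => (S.pos_mem v).2
  have hind : ∀ s ∈ S.simplices, ∀ a : S.V → ℝ, (∀ v, v ∉ s → a v = 0) →
      ∑ v, a v • S.pos v = 0 → a = 0 := fun s hs => sp_ind S.pos hsum s (S.indep s hs)
  { pos := S.pos
    simp := S.simplices
    nn := fun v k => (S.pos_mem v).1 k
    sum1 := hsum
    card := S.card_simplex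
    ind := hind
    cov := by
      have hcov : ∀ x ∈ stdSimplex ℝ (Fin (n + 1)), ∃ s ∈ S.simplices, ∃ a : S.V → ℝ,
          (∀ v, 0 ≤ a v) ∧ (∀ v, v ∉ s → a v = 0) ∧ ∑ v, a v • S.pos v = x := by
        intro x hx
        rw [← S.covers] at hx
        simp only [Set.mem_iUnion, exists_prop] at hx
        obtain ⟨s, hs, hx⟩ := hx
        obtain ⟨a, h0, h1, -, h2⟩ := (sp_hull S.pos s x).1 hx
        exact ⟨s, hs, a, h0, h1, h2⟩
      intro x hx
      by_cases hz : ∑ k, x k = 0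
      · have hx0 : x = 0 := by
          ext k
          exact (Finset.sum_eq_zero_iff_of_nonneg (fun k _ => hx k)).1 hz k (Finset.mem_univ k)
        obtain ⟨s, hs, -⟩ := hcov (Pi.single 0 1) (single_mem_stdSimplex ℝ 0)
        exact ⟨s, hs, 0, fun _ => le_rfl, fun _ _ => rfl, by simp [hx0]⟩
      · have hpos : 0 < ∑ k, x k :=
          lt_of_le_of_ne (Finset.sum_nonneg fun k _ => hx k) (Ne.symm hz)
        obtain ⟨s, hs, a, h0, h1, h2⟩ := hcov ((∑ k, x k)⁻¹ • x) (by
          refine ⟨fun k => mul_nonneg (inv_nonneg.2 hpos.le) (hx k), ?_⟩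
          simp only [Pi.smul_apply, smul_eq_mul, ← Finset.mul_sum]
          exact inv_mul_cancel₀ hz)
        refine ⟨s, hs, fun v => (∑ k, x k) * a v, fun v => mul_nonneg hpos.le (h0 v),
          fun v hv => by simp [h1 v hv], ?_⟩
        simp only [mul_smul, ← Finset.smul_sum]
        rw [h2, smul_smul, mul_inv_cancel₀ hz, one_smul]
    int := by
      intro s hs t ht a b ha0 hb0 has hbt hab
      have hsab : ∑ v, a v = ∑ v, b v := by
        rw [← sp_sum S.pos hsum a, hab, sp_sum S.pos hsum b]
      by_cases hz : ∑ v, a v = 0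
      · have h1 : ∀ v, a v = 0 := fun v =>
          (Finset.sum_eq_zero_iff_of_nonneg (fun v _ => ha0 v)).1 hz v (Finset.mem_univ v)
        have h2 : ∀ v, b v = 0 := fun v =>
          (Finset.sum_eq_zero_iff_of_nonneg (fun v _ => hb0 v)).1 (hsab ▸ hz) v (Finset.mem_univ v)
        ext v
        rw [h1, h2]
      · have hpos : 0 < ∑ v, a v :=
          lt_of_le_of_ne (Finset.sum_nonneg fun k _ => ha0 k) (Ne.symm hz)
        set r := ∑ v, a v with hr
        have hxs : r⁻¹ • ∑ v, a v • S.pos v ∈ convexHull ℝ (S.pos '' (s : Set S.V)) := by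
          rw [sp_hull]
          refine ⟨fun v => r⁻¹ * a v, fun v => mul_nonneg (inv_nonneg.2 hpos.le) (ha0 v),
            fun v hv => ?_, ?_, ?_⟩
          · simp only [has v hv, mul_zero]
          · rw [← Finset.mul_sum, ← hr, inv_mul_cancel₀ hz]
          · simp only [mul_smul, ← Finset.smul_sum]
        have hxt : r⁻¹ • ∑ v, a v • S.pos v ∈ convexHull ℝ (S.pos '' (t : Set S.V)) := by
          rw [sp_hull, hab]
          refine ⟨fun v => r⁻¹ * b v, fun v => mul_nonneg (inv_nonneg.2 hpos.le) (hb0 v),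
            fun v hv => ?_, ?_, ?_⟩
          · simp only [hbt v hv, mul_zero]
          · rw [← Finset.mul_sum, ← hsab, inv_mul_cancel₀ hz]
          · simp only [mul_smul, ← Finset.smul_sum]
        have hx := (S.inter s hs t ht).subset ⟨hxs, hxt⟩
        rw [@Finset.coe_inter _ S.decV, sp_hull] at hx
        obtain ⟨c, -, hc, -, hcx⟩ := hx
        have hcx' : r • ∑ v, c v • S.pos v = ∑ v, a v • S.pos v := by
          rw [hcx, smul_smul, mul_inv_cancel₀ hz, one_smul]
        have e1 := hind s hs (fun v => a v - r * c v) (by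
          intro v hv
          rw [has v hv, hc v (fun h => hv h.1)]; simp) (by
          simp only [sub_smul, mul_smul, Finset.sum_sub_distrib, ← Finset.smul_sum]
          rw [hcx', sub_self])
        have e2 := hind t ht (fun v => b v - r * c v) (by
          intro v hv
          rw [hbt v hv, hc v (fun h => hv h.2)]; simp) (by
          simp only [sub_smul, mul_smul, Finset.sum_sub_distrib, ← Finset.smul_sum]
          rw [hcx', hab, sub_self])
        ext v
        have h1 := congrFun e1 v
        have h2 := congrFun e2 v
        simp only [Pi.zero_apply] at h1 h2
        linarith }

end bridge

/-- Sperner's lemma in dimension `n`: for a Sperner labeling (each vertex gets a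
label at which its barycentric coordinate is nonzero) the number of fully labeled
small simplices is odd; in particular at least one exists. -/
theorem sperner_lemma (n : ℕ) (S : SimplicialSubdivision n)
    (ℓ : S.V → Fin (n + 1)) (hℓ : ∀ v, S.pos v (ℓ v) ≠ 0) :
    Odd ((S.simplices.filter (fun s => ∀ k : Fin (n + 1), ∃ v ∈ s, ℓ v = k)).card) ∧
    ∃ s ∈ S.simplices, ∀ k : Fin (n + 1), ∃ v ∈ s, ℓ v = k := by
  letI := S.fintypeV
  have h := S.toSpCx.main ℓ hℓ
  have h' : Odd ((S.simplices.filter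
      (fun s => ∀ k : Fin (n + 1), ∃ v ∈ s, ℓ v = k)).card) := by
    exact h
  refine ⟨h', ?_⟩
  obtain ⟨s, hs⟩ := Finset.card_pos.1 h'.pos
  rw [Finset.mem_filter] at hs
  exact ⟨s, hs.1, hs.2⟩
end
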